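/- arXiv:1901.03725 — 2 statements merged into one kernel-verified Lean document; each statement's English description precedes it below -/
import Mathlib

section
/- Let L_1, L_2, L_3 ⊆ ℂ^4 be 2-dimensional linear subspaces (lines in P^3) which are pairwise disjoint, and let m ≥ 1 be an integer. Then the ℂ-vector space of homogeneous polynomials F of degree 2m in ℂ[x_0,x_1,x_2,x_3] with F ∈ I(L_i)^m for i = 1,2,3 has dimension exactly 1. Moreover, for every m ≥ 2 one has binom(2m+3,3) ≤ (1/2)·m·(m+1)·(4m+5), so for m ≥ 2 this linear system 𝓛_{2m}(m,m,m) is special (its dimension 1 exceeds its expected dimension max{binom(2m+3,3) − 3·(1/6)·m·(m+1)·(4m+5), 0} = 0). -/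
open MvPolynomial

noncomputable section

abbrev C4 : Type := Fin 4 → ℂ
abbrev R3 : Type := MvPolynomial (Fin 4) ℂ

/-- The homogeneous ideal of the line in `P^3` corresponding to a linear subspace
`L ⊆ ℂ^4`: all polynomials vanishing identically on `L`. -/
def lineIdeal (L : Submodule ℂ C4) : Ideal R3 where
  carrier := {F | ∀ v ∈ L, eval v F = 0}
  add_mem' := by
    intro a b ha hb v hv
    simp [ha v hv, hb v hv]
  zero_mem' := by
    intro v hv
    simp
  smul_mem' := by
    intro c F hF v hv
    simp [smul_eq_mul, hF v hv]


/-- Restriction of `F` to the affine line `v + t w`. -/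
def restr (v w : C4) : R3 →ₐ[ℂ] Polynomial ℂ :=
  aeval (fun i => Polynomial.C (v i) + Polynomial.X * Polynomial.C (w i))

lemma restr_eval (v w : C4) (F : R3) (t : ℂ) :
    (restr v w F).eval t = eval (v + t • w) F := by
  induction F using MvPolynomial.induction_on with
  | C a => simp [restr]
  | add p q hp hq => simp [hp, hq]
  | mul_X p i hp => simp [hp]; left; simp [restr]; ring

lemma restr_dvd (L : Submodule ℂ C4) (m : ℕ) (F : R3) (hF : F ∈ lineIdeal L ^ m)
    (v w : C4) (hv : v ∈ L) : Polynomial.X ^ m ∣ restr v w F := by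
  have h1 : (lineIdeal L).map (restr v w) ≤ Ideal.span {(Polynomial.X : Polynomial ℂ)} := by
    rw [Ideal.map_le_iff_le_comap]
    intro G hG
    rw [Ideal.mem_comap, Ideal.mem_span_singleton, Polynomial.X_dvd_iff,
      Polynomial.coeff_zero_eq_eval_zero, restr_eval]
    simpa using hG v hv
  have h2 := Ideal.mem_map_of_mem (restr v w) hF
  rw [Ideal.map_pow] at h2
  have h3 := Ideal.pow_right_mono h1 m h2
  rwa [Ideal.span_singleton_pow, Ideal.mem_span_singleton] at h3

lemma const_of_inv (g h : Polynomial ℂ) (H : ∀ t : ℂ, t ≠ 0 → g.eval t = h.eval t⁻¹) :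
    ∃ c : ℂ, g = Polynomial.C c ∧ h = Polynomial.C c := by
  have key : Polynomial.X ^ h.natDegree * g = h.reverse := by
    have : Polynomial.X * (Polynomial.X ^ h.natDegree * g) = Polynomial.X * h.reverse := by
      apply Polynomial.funext
      intro t
      by_cases ht : t = 0
      · simp [ht]
      · let _ := invertibleOfNonzero (inv_ne_zero ht)
        have := Polynomial.eval₂_reverse_mul_pow (RingHom.id ℂ) t⁻¹ h
        simp only [invOf_eq_inv, inv_inv, Polynomial.eval₂_id] at this
        simp only [Polynomial.eval_mul, Polynomial.eval_X, Polynomial.eval_pow]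
        rw [H t ht, ← this, inv_pow]
        field_simp
    exact mul_left_cancel₀ Polynomial.X_ne_zero this
  have hg : g.natDegree = 0 := by
    by_cases h0 : g = 0
    · simp [h0]
    have h1 := congrArg Polynomial.natDegree key
    rw [Polynomial.natDegree_mul (pow_ne_zero _ Polynomial.X_ne_zero) h0,
      Polynomial.natDegree_X_pow] at h1
    have := Polynomial.reverse_natDegree_le h
    omega
  obtain ⟨c, hc⟩ := Polynomial.natDegree_eq_zero.1 hg
  refine ⟨c, hc.symm, ?_⟩
  have : Polynomial.X * h = Polynomial.X * Polynomial.C c := by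
    apply Polynomial.funext
    intro t
    by_cases ht : t = 0
    · simp [ht]
    · have := H t⁻¹ (inv_ne_zero ht)
      simp only [← hc, Polynomial.eval_C, inv_inv] at this
      simp [← this]; ring
  exact mul_left_cancel₀ Polynomial.X_ne_zero this

lemma hom_eval (n : ℕ) (F : R3) (hF : F.IsHomogeneous n) (t : ℂ) (v : C4) :
    eval (t • v) F = t ^ n * eval v F := by
  rw [eval_eq, eval_eq, Finset.mul_sum]
  apply Finset.sum_congr rfl
  intro d hd
  have hdeg : ∑ i, d i = n := by
    have := hF (mem_support_iff.1 hd)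
    rw [Finsupp.weight_apply, Finsupp.sum_fintype _ _ (by simp)] at this
    simpa using this
  simp only [Pi.smul_apply, smul_eq_mul, mul_pow]
  rw [Finset.prod_mul_distrib]
  have : ∏ i ∈ d.support, t ^ d i = t ^ n := by
    rw [Finset.prod_pow_eq_pow_sum, ← hdeg]
    congr 1
    apply Finset.sum_subset (Finset.subset_univ _)
    intro i _ hi
    simpa using hi
  rw [this]
  ring

lemma scale_right (m : ℕ) (F : R3) (hF : F.IsHomogeneous (2 * m)) (A B : Submodule ℂ C4)
    (hA : F ∈ lineIdeal A ^ m) (hB : F ∈ lineIdeal B ^ m) (p q : C4) (hp : p ∈ A) (hq : q ∈ B)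
    (t : ℂ) : eval (p + t • q) F = t ^ m * eval (p + q) F := by
  obtain ⟨g, hg⟩ := restr_dvd A m F hA p q hp
  obtain ⟨h, hh⟩ := restr_dvd B m F hB q p hq
  have eg : ∀ t, eval (p + t • q) F = t ^ m * g.eval t := by
    intro t; rw [← restr_eval, hg]; simp
  have eh : ∀ t, eval (q + t • p) F = t ^ m * h.eval t := by
    intro t; rw [← restr_eval, hh]; simp
  obtain ⟨c, hc, -⟩ := const_of_inv g h (by
    intro t ht
    have h1 : p + t • q = t • (q + t⁻¹ • p) := by
      rw [smul_add, smul_smul, mul_inv_cancel₀ ht, one_smul, add_comm]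
    have h2 := eg t
    rw [h1, hom_eval _ F hF, eh] at h2
    have h3 : t ^ m * h.eval t⁻¹ = t ^ m * g.eval t := by
      rw [← h2, two_mul, pow_add, inv_pow]; field_simp
    exact (mul_left_cancel₀ (pow_ne_zero _ ht) h3).symm)
  have e1 := eg 1
  rw [eg t]
  simp [hc] at e1 ⊢
  rw [e1]; simp

lemma shear (m : ℕ) (F : R3) (hF : F.IsHomogeneous (2 * m)) (A B D : Submodule ℂ C4)
    (hA : F ∈ lineIdeal A ^ m) (hB : F ∈ lineIdeal B ^ m) (hD : F ∈ lineIdeal D ^ m)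
    (p r q : C4) (hp : p ∈ A) (hr : r ∈ B) (hpr : p + r ∈ D) (hq : q ∈ B) (s : ℂ) :
    eval (p + q + s • r) F = eval (p + q) F := by
  obtain ⟨g, hg⟩ := restr_dvd D m F hD (p + r) q hpr
  have eg : ∀ t, eval (p + r + t • q) F = t ^ m * g.eval t := by
    intro t; rw [← restr_eval, hg]; simp
  obtain ⟨c, -, hc⟩ := const_of_inv g (restr (p + q) r F) (by
    intro t ht
    rw [restr_eval]
    have h1 := scale_right m F hF A B hA hB p (q + t⁻¹ • r) hp
      (B.add_mem hq (B.smul_mem _ hr)) t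
    have h2 : p + t • (q + t⁻¹ • r) = p + r + t • q := by
      rw [smul_add, smul_smul, mul_inv_cancel₀ ht, one_smul]; abel
    rw [h2, eg] at h1
    rw [mul_left_cancel₀ (pow_ne_zero _ ht) h1, add_assoc])
  have h1 := restr_eval (p + q) r F s
  have h0 := restr_eval (p + q) r F 0
  rw [hc] at h0 h1
  simp at h0 h1
  rw [← h0, ← h1]

lemma formula (m : ℕ) (F : R3) (hF : F.IsHomogeneous (2 * m)) (A B D : Submodule ℂ C4)
    (hA : F ∈ lineIdeal A ^ m) (hB : F ∈ lineIdeal B ^ m) (hD : F ∈ lineIdeal D ^ m)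
    (e1 e2 f1 f2 : C4) (he1 : e1 ∈ A) (he2 : e2 ∈ A) (hf1 : f1 ∈ B) (hf2 : f2 ∈ B)
    (h1 : e1 + f1 ∈ D) (h2 : e2 + f2 ∈ D) (a b c d : ℂ) (ha : a ≠ 0) :
    eval (a • e1 + b • e2 + c • f1 + d • f2) F = (a * d - b * c) ^ m * eval (e1 + f2) F := by
  have hp : a • e1 + b • e2 ∈ A := A.add_mem (A.smul_mem _ he1) (A.smul_mem _ he2)
  have hr : a • f1 + b • f2 ∈ B := B.add_mem (B.smul_mem _ hf1) (B.smul_mem _ hf2)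
  have hpr : (a • e1 + b • e2) + (a • f1 + b • f2) ∈ D := by
    have : (a • e1 + b • e2) + (a • f1 + b • f2) = a • (e1 + f1) + b • (e2 + f2) := by
      module
    rw [this]; exact D.add_mem (D.smul_mem _ h1) (D.smul_mem _ h2)
  have s1 := shear m F hF A B D hA hB hD _ _ ((d - c / a * b) • f2) hp hr hpr
    (B.smul_mem _ hf2) (c / a)
  have s2 := scale_right m F hF A B hA hB _ f2 hp hf2 (d - c / a * b)
  have s3 := shear m F hF B A D hB hA hD f2 e2 (a • e1) hf2 he2 (by rwa [add_comm])
    (A.smul_mem _ he1) b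
  have s4 := scale_right m F hF B A hB hA f2 e1 hf2 he1 a
  have q1 : a • e1 + b • e2 + c • f1 + d • f2 =
      a • e1 + b • e2 + (d - c / a * b) • f2 + (c / a) • (a • f1 + b • f2) := by
    have : c • f1 = (c / a * a) • f1 := by rw [div_mul_cancel₀ _ ha]
    rw [this]; module
  have q2 : a • e1 + b • e2 + f2 = f2 + a • e1 + b • e2 := by abel
  rw [q1, s1, s2, q2, s3, s4, add_comm f2 e1, ← mul_assoc, ← mul_pow]
  congr 2
  field_simp

lemma frames (A B D : Submodule ℂ C4) (hA : Module.finrank ℂ A = 2)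
    (hB : Module.finrank ℂ B = 2) (hDd : Module.finrank ℂ D = 2)
    (hAB : A ⊓ B = ⊥) (hAD : A ⊓ D = ⊥) (hBD : B ⊓ D = ⊥) :
    ∃ b : Module.Basis (Fin 4) ℂ C4, b 0 ∈ A ∧ b 1 ∈ A ∧ b 2 ∈ B ∧ b 3 ∈ B ∧
      b 0 + b 2 ∈ D ∧ b 1 + b 3 ∈ D := by
  have htop : A ⊔ B = ⊤ := by
    apply Submodule.eq_top_of_finrank_eq
    have := Submodule.finrank_sup_add_finrank_inf_eq A B
    rw [hAB] at this
    simp [hA, hB] at this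
    simp [this]
  have zero_of : ∀ {S T : Submodule ℂ C4}, S ⊓ T = ⊥ → ∀ x, x ∈ S → x ∈ T → x = 0 := by
    intro S T h x hS hT
    have : x ∈ S ⊓ T := ⟨hS, hT⟩
    rwa [h, Submodule.mem_bot] at this
  let c := Module.finBasisOfFinrankEq ℂ D hDd
  obtain ⟨e1, he1, f1, hf1, h1⟩ := Submodule.mem_sup.1
    (htop ▸ Submodule.mem_top : ((c 0 : D) : C4) ∈ A ⊔ B)
  obtain ⟨e2, he2, f2, hf2, h2⟩ := Submodule.mem_sup.1
    (htop ▸ Submodule.mem_top : ((c 1 : D) : C4) ∈ A ⊔ B)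
  have hc : ∀ x y : ℂ, x • (e1 + f1) + y • (e2 + f2) = 0 → x = 0 ∧ y = 0 := by
    intro x y hxy
    rw [h1, h2] at hxy
    have h3 : x • c 0 + y • c 1 = 0 := by
      apply Subtype.ext; simpa using hxy
    have := Fintype.linearIndependent_iff.1 c.linearIndependent ![x, y]
      (by simpa [Fin.sum_univ_two] using h3)
    exact ⟨this 0, this 1⟩
  have hD1 : e1 + f1 ∈ D := h1 ▸ (c 0).2
  have hD2 : e2 + f2 ∈ D := h2 ▸ (c 1).2
  have li : LinearIndependent ℂ ![e1, e2, f1, f2] := by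
    rw [Fintype.linearIndependent_iff]
    intro g hg
    simp only [Fin.sum_univ_four] at hg
    simp at hg
    have hE : g 0 • e1 + g 1 • e2 = 0 := by
      apply zero_of hAB _ (A.add_mem (A.smul_mem _ he1) (A.smul_mem _ he2))
      have : g 0 • e1 + g 1 • e2 = -(g 2 • f1 + g 3 • f2) := by
        rw [eq_neg_iff_add_eq_zero, ← hg]; abel
      rw [this]
      exact B.neg_mem (B.add_mem (B.smul_mem _ hf1) (B.smul_mem _ hf2))
    have hE2 : g 2 • f1 + g 3 • f2 = 0 := by
      rw [hE, zero_add] at hg; exact hg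
    have k1 := hc (g 0) (g 1) (by
      apply zero_of hBD _ _ (D.add_mem (D.smul_mem _ hD1) (D.smul_mem _ hD2))
      have : g 0 • (e1 + f1) + g 1 • (e2 + f2) = (g 0 • e1 + g 1 • e2) + (g 0 • f1 + g 1 • f2) := by
        module
      rw [this, hE, zero_add]
      exact (B.add_mem (B.smul_mem _ hf1) (B.smul_mem _ hf2)))
    have k2 := hc (g 2) (g 3) (by
      apply zero_of hAD _ _ (D.add_mem (D.smul_mem _ hD1) (D.smul_mem _ hD2))
      have : g 2 • (e1 + f1) + g 3 • (e2 + f2) = (g 2 • e1 + g 3 • e2) + (g 2 • f1 + g 3 • f2) := by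
        module
      rw [this, hE2, add_zero]
      exact (A.add_mem (A.smul_mem _ he1) (A.smul_mem _ he2)))
    intro i
    fin_cases i
    exacts [k1.1, k1.2, k2.1, k2.2]
  refine ⟨basisOfLinearIndependentOfCardEqFinrank li (by simp), ?_⟩
  simp only [coe_basisOfLinearIndependentOfCardEqFinrank]
  exact ⟨he1, he2, hf1, hf2, hD1, hD2⟩

/-- The linear form giving the `i`-th coordinate in the basis `b`. -/
def coordForm (b : Module.Basis (Fin 4) ℂ C4) (i : Fin 4) : R3 :=
  ∑ j, C (b.repr (Pi.single j 1) i) * X j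

lemma coordForm_eval (b : Module.Basis (Fin 4) ℂ C4) (i : Fin 4) (v : C4) :
    eval v (coordForm b i) = b.repr v i := by
  have : v = ∑ j, v j • (Pi.single j 1 : C4) := by
    ext k; simp [Finset.sum_apply, Pi.single_apply]
  conv_rhs => rw [this]
  simp [coordForm, mul_comm]

lemma coordForm_hom (b : Module.Basis (Fin 4) ℂ C4) (i : Fin 4) :
    (coordForm b i).IsHomogeneous 1 := by
  apply IsHomogeneous.sum
  intro j _
  simpa using (isHomogeneous_C (Fin 4) (b.repr (Pi.single j 1) i)).mul (isHomogeneous_X ℂ j)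

/-- The quadric through the three lines. -/
def quadric (b : Module.Basis (Fin 4) ℂ C4) : R3 :=
  coordForm b 0 * coordForm b 3 - coordForm b 1 * coordForm b 2

lemma quadric_eval (b : Module.Basis (Fin 4) ℂ C4) (v : C4) :
    eval v (quadric b) = b.repr v 0 * b.repr v 3 - b.repr v 1 * b.repr v 2 := by
  simp [quadric, coordForm_eval]

lemma quadric_hom (b : Module.Basis (Fin 4) ℂ C4) : (quadric b).IsHomogeneous 2 :=
  ((coordForm_hom b 0).mul (coordForm_hom b 3)).sub ((coordForm_hom b 1).mul (coordForm_hom b 2))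

lemma quadric_mem (A B D : Submodule ℂ C4) (hAB : A ⊓ B = ⊥) (hBD : B ⊓ D = ⊥)
    (b : Module.Basis (Fin 4) ℂ C4) (h0 : b 0 ∈ A) (h1 : b 1 ∈ A) (h2 : b 2 ∈ B)
    (h3 : b 3 ∈ B) (h4 : b 0 + b 2 ∈ D) (h5 : b 1 + b 3 ∈ D) :
    quadric b ∈ lineIdeal A ∧ quadric b ∈ lineIdeal B ∧ quadric b ∈ lineIdeal D := by
  have zero_of : ∀ {S T : Submodule ℂ C4}, S ⊓ T = ⊥ → ∀ x, x ∈ S → x ∈ T → x = 0 := by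
    intro S T h x hS hT
    have : x ∈ S ⊓ T := ⟨hS, hT⟩
    rwa [h, Submodule.mem_bot] at this
  have dec : ∀ v, v = b.repr v 0 • b 0 + b.repr v 1 • b 1 + b.repr v 2 • b 2
      + b.repr v 3 • b 3 := by
    intro v
    conv_lhs => rw [← b.sum_repr v, Fin.sum_univ_four]
  have li : ∀ x y z w : ℂ, x • b 0 + y • b 1 + z • b 2 + w • b 3 = 0 →
      x = 0 ∧ y = 0 ∧ z = 0 ∧ w = 0 := by
    intro x y z w h
    have := Fintype.linearIndependent_iff.1 b.linearIndependent ![x, y, z, w]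
      (by simpa [Fin.sum_univ_four] using h)
    exact ⟨this 0, this 1, this 2, this 3⟩
  have memA : ∀ x y : ℂ, x • b 0 + y • b 1 ∈ A := fun x y =>
    A.add_mem (A.smul_mem _ h0) (A.smul_mem _ h1)
  have memB : ∀ x y : ℂ, x • b 2 + y • b 3 ∈ B := fun x y =>
    B.add_mem (B.smul_mem _ h2) (B.smul_mem _ h3)
  have memD : ∀ x y : ℂ, x • (b 0 + b 2) + y • (b 1 + b 3) ∈ D := fun x y =>
    D.add_mem (D.smul_mem _ h4) (D.smul_mem _ h5)
  refine ⟨?_, ?_, ?_⟩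
  · intro v hv
    rw [quadric_eval]
    have hd := dec v
    generalize b.repr v 0 = x at *
    generalize b.repr v 1 = y at *
    generalize b.repr v 2 = z at *
    generalize b.repr v 3 = w at *
    have e : z • b 2 + w • b 3 = 0 := by
      apply zero_of hAB _ _ (memB z w)
      have : z • b 2 + w • b 3 = v - (x • b 0 + y • b 1) := by rw [hd]; abel
      rw [this]; exact A.sub_mem hv (memA x y)
    obtain ⟨-, -, rfl, rfl⟩ := li 0 0 z w (by simpa using e)
    simp
  · intro v hv
    rw [quadric_eval]
    have hd := dec v
    generalize b.repr v 0 = x at *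
    generalize b.repr v 1 = y at *
    generalize b.repr v 2 = z at *
    generalize b.repr v 3 = w at *
    have e : x • b 0 + y • b 1 = 0 := by
      apply zero_of hAB _ (memA x y)
      have : x • b 0 + y • b 1 = v - (z • b 2 + w • b 3) := by rw [hd]; abel
      rw [this]; exact B.sub_mem hv (memB z w)
    obtain ⟨rfl, rfl, -, -⟩ := li x y 0 0 (by simpa using e)
    simp
  · intro v hv
    rw [quadric_eval]
    have hd := dec v
    generalize b.repr v 0 = x at *
    generalize b.repr v 1 = y at *
    generalize b.repr v 2 = z at *
    generalize b.repr v 3 = w at *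
    have e : (z - x) • b 2 + (w - y) • b 3 = 0 := by
      apply zero_of hBD _ (memB _ _)
      have : (z - x) • b 2 + (w - y) • b 3 = v - (x • (b 0 + b 2) + y • (b 1 + b 3)) := by
        rw [hd]; module
      rw [this]; exact D.sub_mem hv (memD x y)
    obtain ⟨-, -, hz, hw⟩ := li 0 0 (z - x) (w - y) (by simpa using e)
    rw [sub_eq_zero.1 hz, sub_eq_zero.1 hw]
    ring

/-- For three pairwise skew lines and any `m ≥ 1`, the system
`𝓛_{2m}(m,m,m)` of degree-`2m` forms with multiplicity `m` along the three lines
has dimension exactly 1; moreover for every `m ≥ 2` one has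
`binom(2m+3,3) ≤ m(m+1)(4m+5)/2` (stated multiplied through by 2),
so for `m ≥ 2` the system is special. -/
theorem stmt_2 (m : ℕ) (hm : 1 ≤ m) (L : Fin 3 → Submodule ℂ C4)
    (hdim : ∀ i, Module.finrank ℂ ↥(L i) = 2)
    (hskew : ∀ i j, i ≠ j → L i ⊓ L j = ⊥) :
    (Module.finrank ℂ
      ↥(homogeneousSubmodule (Fin 4) ℂ (2 * m) ⊓
        ⨅ i, Submodule.restrictScalars ℂ ((lineIdeal (L i)) ^ m)) = 1) ∧
    (∀ k : ℕ, 2 ≤ k → 2 * (2 * k + 3).choose 3 ≤ k * (k + 1) * (4 * k + 5)) := by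
  refine ⟨?_, ?_⟩
  · have hAB := hskew 0 1 (by decide)
    have hAD := hskew 0 2 (by decide)
    have hBD := hskew 1 2 (by decide)
    obtain ⟨b, h0, h1, h2, h3, h4, h5⟩ :=
      frames (L 0) (L 1) (L 2) (hdim 0) (hdim 1) (hdim 2) hAB hAD hBD
    obtain ⟨qA, qB, qD⟩ := quadric_mem _ _ _ hAB hBD b h0 h1 h2 h3 h4 h5
    have hQne : quadric b ≠ 0 := by
      intro h
      have := quadric_eval b (b 0 + b 3)
      rw [h] at this
      simp at this
    have hmem : quadric b ^ m ∈ (homogeneousSubmodule (Fin 4) ℂ (2 * m) ⊓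
        ⨅ i, Submodule.restrictScalars ℂ ((lineIdeal (L i)) ^ m)) := by
      refine ⟨(quadric_hom b).pow m, ?_⟩
      rw [SetLike.mem_coe, Submodule.mem_iInf]
      intro i
      rw [Submodule.restrictScalars_mem]
      apply Ideal.pow_mem_pow
      fin_cases i
      exacts [qA, qB, qD]
    rw [finrank_eq_one_iff_of_nonzero' ⟨quadric b ^ m, hmem⟩
      (by intro h; exact pow_ne_zero m hQne (congrArg Subtype.val h))]
    rintro ⟨F, hFh, hFI⟩
    rw [SetLike.mem_coe, Submodule.mem_iInf] at hFI
    refine ⟨eval (b 0 + b 3) F, Subtype.ext ?_⟩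
    change eval (b 0 + b 3) F • quadric b ^ m = F
    have hx : coordForm b 0 ≠ 0 := by
      intro h
      have := coordForm_eval b 0 (b 0)
      rw [h] at this
      simp at this
    apply mul_left_cancel₀ hx
    apply MvPolynomial.funext
    intro v
    rw [eval_mul, eval_mul, smul_eval, eval_pow, coordForm_eval, quadric_eval]
    by_cases ha : b.repr v 0 = 0
    · rw [ha]; simp
    · have := formula m F hFh (L 0) (L 1) (L 2) (hFI 0) (hFI 1) (hFI 2) (b 0) (b 1) (b 2) (b 3)
        h0 h1 h2 h3 h4 h5 (b.repr v 0) (b.repr v 1) (b.repr v 2) (b.repr v 3) ha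
      have dec : b.repr v 0 • b 0 + b.repr v 1 • b 1 + b.repr v 2 • b 2
          + b.repr v 3 • b 3 = v := by
        conv_rhs => rw [← b.sum_repr v, Fin.sum_univ_four]
      rw [dec] at this
      rw [this]
      ring
  · intro k hk
    have h6 : (2 * k + 3).choose 3 * 6 = (2 * k + 3) * (2 * k + 2) * (2 * k + 1) := by
      have := Nat.descFactorial_eq_factorial_mul_choose (2 * k + 3) 3
      simp [Nat.descFactorial, Nat.factorial] at this
      linarith
    have h7 : k + 6 ≤ 4 * k ^ 2 := by nlinarith
    have h8 := Nat.mul_le_mul_left (k + 1) h7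
    nlinarith [h6, h8]
end
end

section
/- For general lines L_1,…,L_9 in P^3 (i.e., there exists a nonzero polynomial P in the 72 coordinates of spanning vectors a_1,b_1,…,a_9,b_9 ∈ ℂ^4 such that whenever P does not vanish, each pair a_i,b_i is linearly independent, the subspaces L_i = span{a_i,b_i} pairwise intersect only in 0, and the following holds): the ℂ-vector space of homogeneous polynomials F of degree 10 in ℂ[x_0,x_1,x_2,x_3] with F ∈ I(L_i)^3 for i = 1,…,4 and F ∈ I(L_i) for i = 5,…,9 has dimension exactly 1. Since binom(13,3) = 286 < 287 = 4·58 + 5·11, this system 𝓛_{10}(3,3,3,3,1,1,1,1,1) has negative virtual dimension, so it is special (unexpected). -/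
open MvPolynomial

noncomputable section

/-- The linear system `𝓛_d(m_1, …, m_s)`: homogeneous forms of degree `d`
vanishing to order `m i` along the line `L i`, as a `ℂ`-subspace. -/
def linSys (d : ℕ) {s : ℕ} (L : Fin s → Submodule ℂ C4) (m : Fin s → ℕ) :
    Submodule ℂ R3 :=
  homogeneousSubmodule (Fin 4) ℂ d ⊓
    ⨅ i, Submodule.restrictScalars ℂ ((lineIdeal (L i)) ^ (m i))

/-- A property `Q` holds for `s` *general* lines in `P^3`: there is a nonzero
polynomial `P` in the `8s` coordinates of spanning vectors such that whenever
`P` does not vanish, each pair of vectors is linearly independent, the spanned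
planes are pairwise disjoint, and `Q` holds for these lines. -/
def GeneralLines (s : ℕ) (Q : (Fin s → Submodule ℂ C4) → Prop) : Prop :=
  ∃ P : MvPolynomial (Fin s × Fin 2 × Fin 4) ℂ, P ≠ 0 ∧
    ∀ v : Fin s → Fin 2 → C4,
      MvPolynomial.eval (fun p => v p.1 p.2.1 p.2.2) P ≠ 0 →
      (∀ i, LinearIndependent ℂ ![v i 0, v i 1]) ∧
      (∀ i j, i ≠ j →
        Submodule.span ℂ {v i 0, v i 1} ⊓ Submodule.span ℂ {v j 0, v j 1} = ⊥) ∧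
      Q (fun i => Submodule.span ℂ {v i 0, v i 1})

/-! ### The certificate for the special configuration -/

/-- Entry of the linear condition `rho` at the monomial with index `c = (b, i, j)`.
`rho = (0, b, q, k1, k2)`: a derivative condition at the `q`-th point in bidegree `(10 - b, b)`;
`rho = (1, e, _)`: the coefficient condition along the diagonal;
otherwise: the additional normalising condition. -/
def alphaN : ℕ → ℕ
  | 0 => 0 | 1 => 1 | 2 => 2 | _ => 3
def betaN : ℕ → ℕ
  | 0 => 1 | 1 => 2 | 2 => 3 | _ => 0

def tEntry (b q k1 k2 : ℕ) (c : ℕ × ℕ × ℕ) : ℕ :=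
  if c.1 = b then
    Nat.choose c.2.1 k1 * alphaN q ^ (c.2.1 - k1) * (Nat.choose c.2.2 k2 * betaN q ^ (c.2.2 - k2))
  else 0
def dEntry (e : ℕ) (c : ℕ × ℕ × ℕ) : ℕ := if c.2.1 + c.2.2 = e then 1 else 0
def nEntry (c : ℕ × ℕ × ℕ) : ℕ := if c = (5, 2, 2) then 1 else 0

def colsL (r : ℕ) : List (ℕ × ℕ × ℕ) :=
  ((List.range 11).filter (fun b => b % 5 = r)).flatMap fun b =>
    (List.range (11 - b)).flatMap fun i => (List.range (b + 1)).map fun j => (b, i, j)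

def kL : List (ℕ × ℕ) := [(0, 0), (0, 1), (0, 2), (1, 0), (1, 1), (2, 0)]

def rowsL (r : ℕ) : List (ℕ × ℕ × ℕ → ℕ) :=
  (((List.range 11).filter (fun b => b % 5 = r)).flatMap fun b =>
    (List.range 4).flatMap fun q => kL.map fun k => tEntry b q k.1 k.2) ++
  ((List.range 11).map dEntry ++ [nEntry])

def dotL : List ℕ → List ℕ → ℕ
  | b :: bs, a :: as => b * a + dotL bs as
  | _, _ => 0

def digs : ℕ → ℕ → List ℕ
  | 0, _ => []
  | k + 1, n => (n % 10) :: digs k (n / 10)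

def packL : List ℕ → ℕ
  | [] => 0
  | a :: as => a + 8192 * packL as

def okPack (u : ℕ × ℕ × ℕ) : List (ℕ × ℕ × ℕ) → ℕ → Bool
  | [], _ => true
  | c :: cs, S => (S % 8192 % 7 == if u = c then 1 else 0) && okPack u cs (S / 8192)

/-- Forces kernel evaluation of a natural number before it is passed on. -/
def forceN (a : ℕ) (k : ℕ → Bool) : Bool :=
  match a with
  | 0 => k 0
  | Nat.succ n => k (Nat.succ n)

def forceL : List ℕ → (List ℕ → Bool) → Bool
  | [], k => k []
  | a :: as, k => forceN a fun a' => forceL as fun as' => k (a' :: as')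

def checkL (cs : List (ℕ × ℕ × ℕ)) (rs : List (ℕ × ℕ × ℕ → ℕ)) (Bs : List ℕ) : Bool :=
  decide (cs.length ≤ Bs.length) &&
  forceL (rs.map fun rho => packL (cs.map fun c => rho c % 7)) fun packs =>
    (cs.zip Bs).all fun x => forceN (dotL (digs 85 x.2) packs) fun S => okPack x.1 cs S

def cert0 : List ℕ := [
  1,
  1000,
  100000,
  3000603003400001301003,
  3002002000203001306004,
  3005403005001003100001,
  4006100000401003302005,
  1000100003204002401002,
  3003003004402004606003,
  5003102000005005302006,
  6002101006505003402003,
  1000006000000000000000000000000000000000000000000000000000000000000000006,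
  501644050451000031000524000314000004201223321250165141536522005001505006504002506004,
  456111655450000063000030000302000512112662645662050624412136003000300002501002006003,
  64311346645000062000504000115000645642554640511155453000331003001305000401003502005,
  315200461262000002000544000513000133530662002626105536365645000001005005600001503005,
  225211112515000060000652000240000260062223646205456500241621003004306001101006604005,
  206133020336000036000253000463000003506554456520612636241255002006202001203005200003,
  312666122423000015000056000464000063464111354335465532255543005006406004006003001005,
  320245554505000005000311000434000206413313141053512621346602000002104001501002306004,
  463553421634000001000161000455000353064405511265312142615055001006303004403004102003,
  365423156565000023000035000043000215330336445103312014311153003005004003201005002003,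
  665311351505000011000115000542000021554542424355041316564023003003402001100002103003,
  16000000004000021000616000660000353201004555550332321110105006001001001200002600006,
  306543645552000034000144000441000123222025351153101441424553006002302000200004105006,
  100000000000000000000000000000000000000000000000000000000000000000000000000000000000,
  155463304305000064000224000352000106142525326346400265532120006000101000303001203001,
  31256210601000040000112000646000335611103433646525421414463003000502005401006106002,
  253362325022000065000465000225000644301134666636126106104313000004501001303001400006,
  164455010552000036000256000345000422200662415130016032014061002002100003605004200003,
  123150625216000002000502000446000305554260206043166600265535003006601001104003503005,
  620440546445000036000431000525000064514014353414326515640333004000101001405001404000,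
  544602325242000032000215000621000644221421050310223156234065005001405006100006200006,
  66341606232000063000002000004000623501566400006102011425466000002000004602003006003,
  565155050442000026000635000640000461001221356101506634662326001000006001301000600004,
  553644050442000004000006000534000145406220065620201206316326000006503004104005000004,
  51654523102000015000010000332000005605615334123523010242044001000303002000005001005,
  411635240105000025000624000256000111012154625442405440120163000006300000003000600003,
  300550031652000003000264000516000006201653326605523656002425003000304004203001204000,
  456634040663000006000345000653000224005335400155251000335251003006306000503000306005,
  21600000000000031000230000631000655000000116165660604111115000003406006101000200005,
  215133020336000054000162000353000356601555234300244250351353001000203002403000100006,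
  603451421031000010000140000503000343156334022501360221222210006005405002402004103002,
  235304522641000022000422000236000433404201162244033011253350003001502002102000403003,
  533165050442000044000623000341000364001221021521020143550200000005406002201003602002,
  50100000000000016000255000433000450000000661612110103666662002001206001601002205003,
  10000000000000065000324000254000611000000000000000000000000001005606001202004305004,
  1000000000000000000000000000000000000000000000000000000000000000000,
  10000000000000000000000000000000000000000000000000000000000000000000,
  55000152000121000626000000000000000000000000000000000000000000000000,
  24000346000226000165000000000000000000000000000000000000000000000000,
  5000341000313000625000000000000000000000000000000000000000000000000,
  56000110000556000632000000000000000000000000000000000000000000000000,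
  36000355000463000100000000000000000000000000000000000000000000000000,
  1000401000510000555000000000000000000000000000000000000000000000000,
  15000651000613000505000000000000000000000000000000000000000000000000,
  30000362000413000442000000000000000000000000000000000000000000000000,
  12000453000523000166000000000000000000000000000000000000000000000000]

def cert1 : List ℕ := [
  61,
  10,
  61000,
  10000,
  260023510026625030402055,
  510054260051152040405022,
  444064142052455065533063,
  506066331000610043100005,
  315056260034114002305022,
  646004251063206063631044,
  31012635013354012244050,
  153016334036225015012054,
  364020510002625043445012,
  354040043046305032652036,
  116052202034146021366040,
  355065642000550066200013,
  620034416015234036664026,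
  555061422026435006502031,
  251040356062562003165042,
  36002111016555053442023,
  1000000000000000000000000000000000000000000000016,
  6000000010102001555550332321110105036031001011220002606063,
  210000113446005346506503212464165421065160032464021652053,
  45343601222321216145313236325256555146043652002206004602053,
  22035304263654145654234430535220504120060455000600024556060,
  50462403015034633405511052024411121034001500042511021250015,
  31504106230004561233140001144163112104024556060253012365041,
  1000000000605006222220445456660602041046006066550005110004,
  1560000060130005653421642244203514130035106015245024523000,
  25014100565400545351432505365226534644020101063012060022006,
  12240013324543503130552616305626450230022513052551050125026,
  60112041040046346155654626023606011116050612005123043360026,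
  55211333623505143411241151161050516541003621042640060204046,
  410360012032020402504053154661334622055232065203052210060,
  6000000004201004555550332321110105036031001011220002660046,
  16420000061153020025402156222152262522051460034366051142020,
  1012400212441161114315012636211540265024334030243001002060,
  22314633013365415305615302021433660644006254055322016504001,
  2512514526112241031142030034605501663044424044603000663060,
  43505630044450014501362315505234626155043426060246035060062,
  1421000001602006030645414522616330123032432060331056363045,
  5000000006603003333330664642220203065062002022440004550060,
  41560000054316040434233051336530151154034432042356036363045,
  43036500042323144224125250630152343405041041035145055152001,
  36640331663156153430563000430501015030010435035666040221006,
  43232040036026060053221062615250612050013406016201054450042,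
  30025000005203002236456545320253121014022242036064061646040,
  20600000000000000116165660604111115210025136060451066050063,
  1000000001300005222220445456660602041046006066550005110013,
  42630000044163023402356324156652412462040031025600021253024,
  30311200212014526442531665155235340546044151012026054421012,
  61340510062346053521460424210402612334021252010460030656054,
  46431000001602006511453525635615326442001522043445012451030,
  51100000000000000661612110103666662531021640006106016130011,
  10000000000000000000000000000000000041005666061222024335054]

def cert2 : List ℕ := [
  161,
  510,
  100,
  62112600621454125643534311514405000002062323664543236036301,
  23553200235646534261416155456604000003023131226461312004105,
  62112600621454125643534311514405000002062323664543236045301,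
  31051300306213441001526564324001244452205406441134626250043,
  46336400463515361452125233135501000644541134241310016443523,
  460000015056045324133050325205533451031244165333142254211,
  34403200213211526542440563262161313431311506663224325042442,
  45553200230546530635156261514454504000363524041160425365525,
  11000000001300005222220445456660602345231252421051652306322,
  65534500535452203414455310452565146450103423233633503521000,
  62422600613405150326401331266200244646144521203104061454433,
  4355100163002622236156001132610631164116113123405026131003,
  62112600621454125643534311514405000301064323423543042036644,
  53131300324141450316455630325254330243424131302535652246602,
  2256400443050356400526054006545110545014540350116154114323,
  310000062021032453644020452502244555241661062216356204603,
  41515100136565640152644210134346110256441450016642255034653,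
  15515100133365646263054436320606411100264066565026625610034,
  11150000024335011163416405322363261043246111366460601635564,
  10454500514324263210636463644642354563601526645206123263661,
  56633200254104541021565666136040065024042053015536322326531,
  36652600656261105242266540261636423160406215326355030614343,
  21144500523603236056212111641030012053564614664613104606426,
  11000000001300005222220445456660602000241110105335351552436,
  1000000000000000000000000000000000000000000000616,
  15665100160025651134243466263302000005015454113234541041505,
  45026400520312306116355063251000542325331261231315500053655,
  53552601255633262302054312561501642642246644564005224053432,
  60121014120330250243521352443302033323346645610542341024110,
  24314043415236204036214442610000651261531643105231100012663,
  22535636635456114611300351466206206453015324010310353000041,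
  12125460225346544126644415500103251322154130621624265041016,
  6305001000000000000000000000000000000000000000161,
  55224500525512201406264142523102061004225056656644046540406,
  24263200612011442621630336565311565530332530450466432416141,
  12560303400245435551430610256361123206515436214503636645406,
  40520031525233534656253201351434611262224121311635565656156,
  64330213145621666535364021100205016462405515444242432134135,
  24063030545021233354011522300036255245252254300066322441615,
  12434200210313526615442422236113000622315426656552605206325,
  5501002000000000000000000000000000000000000000252,
  12665100166634616464541506364305034005132124512013335632506,
  6530000525134506152213461112640265125110134224222503614332,
  64635003264104260426215232365512550605430662316241356543065,
  56564634334005402355442402613520353232662124526525464326215,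
  66664640243036510226223133165345203301165654164660456654413,
  52006300353351433253650413116111302240043130040053155516543,
  52044500525503232532040114603621624053152503556610146453012,
  1503006000000000000000000000000000000000000000616,
  43336400436645362012423343236504034006163632144631411615600,
  31251300522536353036424362546043366611000502412526625331125,
  32100301045315045532040122243664551362405463164035125520662,
  5645610022355030210504522134600434626436255514533355412454,
  36300400465010365041353050054153064632632205106446023052425,
  26033200252204545245030663104156153024166314326425212106515,
  6000000006400002555550332321110105000536660602442426225341]

def cert3 : List ℕ := [
  1503006000000000000000000000000000000000000000000,
  4605003000000000000000000000000000000000000000153,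
  3102004000000000000000000000000000000000000000534,
  6204001000000000000000000000000000000000000000161,
  42546231552165005061604220202006061000402110105335351552444,
  55026560420321312335012632243205010006342402211135604251430,
  65655504521564152141355323462300014002364343054363063222132,
  62334252054504315310513302640203062006446622414021536523541,
  43334642350354000234355305021216151205304334561555264005525,
  36102625165335345663465616220564136310436430061214151044421,
  41051520053103004525223142453566601254631215345420233005542,
  34360460356062435132511421153215666015113505650365206130066,
  35622545633062001243451256520412162006602224025220033223151,
  44153624563315313440135621125366605263334033641614602513444,
  5463004321604155504603043641160624340515415552016203030353,
  14063563025513614625501422421041113244615562106160462115313,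
  5405405406503006000000505005404004200005000113000240000000,
  15501012454202426665325234630505226135510002660242410050553,
  61530205330310504300323353302262155141633236053113513614035,
  46451645163254221312122032452205446113066165510421415614140,
  26523215532260002061604126201403065306404110543335521552444,
  41233352104121245552146046451205345503002405406421040221642,
  16054431021046521521135462311133446331001653406156541310245,
  12661162166341635351424151624646002216154442512412326364103,
  62251335233523004200053561623610121302100664311006640114303,
  56533506610622010443233013455061206033535230260656533640136,
  45013141160215261111036520112656065053056544311366250663610,
  645040365656041201662551355462441204542625664610133033550,
  36461006435031004125264365612046436402304112603110635115464,
  13235504233440614003322106200230045311102052155056042605322,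
  64524345104324030152663551043425434503131632610204012410650,
  52546231546504006323221445456660602000402110105335351552520,
  204001000000000000000000000000000000000000000000,
  35231546231613006016103550505001016000305660602442426225250,
  340422020342435242012650614366643503332411404643403412605,
  53156561400454245522345324364143250364231614111040524054531,
  36055563110550665664651436225042353556243065424335546202661,
  4342360343050605021652116300435324160064065214462014350346,
  26622535115460655340056034643350412245020655536643020342463,
  10563313052226354351664020440103264515661406261526123225300,
  4162501353202156245625201640261140065545232416010212521645,
  101000000000000000000000000000000000000000000000,
  56154623154335033043405660606004043000506330301221213116160,
  63642104452464154012310152152131326102122313302566640202131,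
  64646610321656513412153311221321316053216244622134562015243,
  24621216300660351255163313140224613413546163666030253023246,
  25265444266560162641532332035124526160265435613241501241256,
  56154623154525663152641453130512316000506330301221213116160,
  13041234426155561130250651663040664323455655256452314116330,
  14655114335422034056640222454206241503436631600536335046245,
  100000000000000000000000000000000000000000000000,
  56154623154325033043405660606004043000506330301221213116160,
  56064060124330452603656644662436320306463452402030312233663,
  60214464025556364063103315252326520262116301516251654552400,
  2431604565530154366020653556032666036626151243040141614326,
  25265444266634551420342356624501231160265435613241501241256,
  4612012363201104014604625015561015663326406611335410062244,
  430355050152042445352223002461431204445366303134304365102,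
  35231546231203001454556332321110105000305660602442426225250]

def cert4 : List ℕ := [
  1003006000000000000000000000000000000000000000000,
  60141063606012314035204003015010022455152326612626311000443,
  30424035304044541056102005046040011266461513341313544000364,
  40353042405032234021605002031030066511316264436464233000331,
  10636014105063466042503004062060055322625451165151466000410,
  10636014111024453042503004062060055322625451165151466000334,
  60023266235061250040205025560002324565513340414064450056442,
  25563030605013225061024026153036444020552560553324134051050,
  24153101616003236024230046440053412155002053254404543025416,
  35256443624053460050522060402003326562562213245611031023312,
  50330553345031534066552066362020361023503624022400553021041,
  61355034031031651025301032022063222131300314616634505136012,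
  60306125365065244052445024066034411142201345344205525331126,
  15546513626002665032614032606015420036353436422516531341662,
  31024336264025230056342000505022133522120542150436140125013,
  21353042443023241030066013141002413115316416656132612660454,
  54545603061050335026430052612054456441604366465343200304044,
  23152410635033321023010031401000060503223540402266123520211,
  51000656150011145035225053562031442103365025011335146431422,
  22454531160040304053020002306046144035222615005432016362451,
  6621651414020225052004025436055132564052416403451520124565,
  13301050536040315006112032010065211551366205012523314464503,
  1234140404014623063313052255016026234212315153120542515523,
  55505446045013012026553004151055363056353223443054243540430,
  62502546231015225000432011262045204000656206531034621301455,
  5306231540040665035546063250033323602120160403345555206566,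
  33260646465020344021332000466056114103351533361525564502653,
  14103000263014311011252042050031041021303510225045233401230,
  46563462315021561010166032562020210000242046153455623321101,
  12600000000022250060164062506003534000000116165660604111115,
  31330553341040513005643000402062015522506146242145232611643,
  63432500456030421014653020605065656042606136111323362244436,
  46512546231030562031403021013041155000656532163365233155221,
  66100000000002555013645062042021412000000661612110103666662,
  10000000000040065032324025254061611000000000000000000000000,
  4001000000000000000000000000000000000000000000,
  40010000000000000000000000000000000000000000000,
  1222062625065656015151000000000000000000000000,
  53036033022035042000254000000000000000000000000,
  35653052423021434031544000000000000000000000000,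
  34541014156020113062044000000000000000000000000,
  550054136021112062556000000000000000000000000,
  33066034025013064000466000000000000000000000000,
  34541026115055155062343000000000000000000000000,
  4551033143001132062121000000000000000000000000,
  1000000000000000000000000000000000000000000000,
  10000000000000000000000000000000000000000000000,
  2244054543053535023232000000000000000000000000,
  65256053226066351014321000000000000000000000000,
  22134001301056402053240000000000000000000000000,
  44626004340021036052352000000000000000000000000,
  24440023121003455034031000000000000000000000000,
  54435010445035632056642000000000000000000000000,
  56261041602022104061410000000000000000000000000,
  30012045453052523016166000000000000000000000000]

theorem check0 : checkL (colsL 0) (rowsL 0) cert0 = true := by decide +kernel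

theorem check1 : checkL (colsL 1) (rowsL 1) cert1 = true := by decide +kernel

theorem check2 : checkL (colsL 2) (rowsL 2) cert2 = true := by decide +kernel

theorem check3 : checkL (colsL 3) (rowsL 3) cert3 = true := by decide +kernel

theorem check4 : checkL (colsL 4) (rowsL 4) cert4 = true := by decide +kernel

theorem forceN_eq (a : ℕ) (k : ℕ → Bool) : forceN a k = k a := by
  cases a <;> rfl

theorem forceL_eq (l : List ℕ) (k : List ℕ → Bool) : forceL l k = k l := by
  induction l generalizing k with
  | nil => rfl
  | cons a as ih => simp [forceL, forceN_eq, ih]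

theorem packL_add {T : Type*} (cs : List T) (b : ℕ) (g h : T → ℕ) :
    packL (cs.map fun c => b * g c + h c) = b * packL (cs.map g) + packL (cs.map h) := by
  induction cs with
  | nil => simp [packL]
  | cons c cs ih => simp only [List.map_cons, packL, ih]; ring

theorem packL_zero {T : Type*} (cs : List T) : packL (cs.map fun _ => 0) = 0 := by
  induction cs with
  | nil => simp [packL]
  | cons c cs ih => simp only [List.map_cons, packL, ih]

theorem dotL_packL {T U : Type*} (cs : List T) (rs : List U) (g : U → T → ℕ) (b : List ℕ) :
    dotL b (rs.map fun rho => packL (cs.map (g rho))) =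
      packL (cs.map fun c => dotL b (rs.map fun rho => g rho c)) := by
  induction rs generalizing b with
  | nil =>
    cases b <;> simp only [List.map_nil, dotL, packL_zero]
  | cons rho rs ih =>
    cases b with
    | nil => simp only [dotL, packL_zero]
    | cons b bs => simp only [List.map_cons, dotL, ih, packL_add]

theorem dotL_bound (k n : ℕ) (l : List ℕ) (hl : ∀ a ∈ l, a ≤ 6) :
    dotL (digs k n) l ≤ 54 * k := by
  induction k generalizing n l with
  | zero => simp [digs, dotL]
  | succ k ih =>
    cases l with
    | nil => simp [digs, dotL]
    | cons a as =>
      simp only [digs, dotL]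
      have h1 := ih (n / 10) as (fun x hx => hl x (by simp [hx]))
      have h2 : a ≤ 6 := hl a (by simp)
      have h3 : n % 10 ≤ 9 := by omega
      have h4 : n % 10 * a ≤ 9 * 6 := Nat.mul_le_mul h3 h2
      omega

theorem okPack_sound (u : ℕ × ℕ × ℕ) (cs : List (ℕ × ℕ × ℕ)) (f : ℕ × ℕ × ℕ → ℕ)
    (hf : ∀ c, f c < 8192) (h : okPack u cs (packL (cs.map f)) = true) :
    ∀ c ∈ cs, f c % 7 = if u = c then 1 else 0 := by
  induction cs with
  | nil => simp
  | cons c cs ih =>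
    simp only [List.map_cons, packL, okPack, Bool.and_eq_true, beq_iff_eq] at h
    have h1 : (f c + 8192 * packL (cs.map f)) % 8192 = f c := by
      have := hf c; omega
    have h2 : (f c + 8192 * packL (cs.map f)) / 8192 = packL (cs.map f) := by
      have := hf c; omega
    rw [h1, h2] at h
    intro d hd
    rcases List.mem_cons.1 hd with rfl | hd
    · exact h.1
    · exact ih h.2 d hd

theorem dotL_mod {U : Type*} (rs : List U) (g : U → ℕ) (b : List ℕ) :
    dotL b (rs.map fun rho => g rho % 7) % 7 = dotL b (rs.map g) % 7 := by
  induction rs generalizing b with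
  | nil => rfl
  | cons rho rs ih =>
    cases b with
    | nil => simp [dotL]
    | cons b bs =>
      simp only [List.map_cons, dotL]
      rw [Nat.add_mod, ih, Nat.mul_mod, Nat.mod_mod, ← Nat.mul_mod, ← Nat.add_mod]

theorem dotL_comb {T : Type*} (s : Finset T) (rs : List (T → ℕ)) (b : List ℕ) (c : T → ℂ)
    (hc : ∀ rho ∈ rs, ∑ t ∈ s, (rho t : ℂ) * c t = 0) :
    ∑ t ∈ s, (dotL b (rs.map fun rho => rho t) : ℂ) * c t = 0 := by
  induction rs generalizing b with
  | nil => cases b <;> simp [dotL]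
  | cons rho rs ih =>
    cases b with
    | nil => simp [dotL]
    | cons b bs =>
      simp only [List.map_cons, dotL, Nat.cast_add, Nat.cast_mul, add_mul,
        Finset.sum_add_distrib, mul_assoc, ← Finset.mul_sum]
      rw [hc rho (by simp), ih bs (fun r hr => hc r (by simp [hr]))]
      simp

theorem checkL_sound (cs : List (ℕ × ℕ × ℕ)) (rs : List (ℕ × ℕ × ℕ → ℕ)) (Bs : List ℕ)
    (h : checkL cs rs Bs = true) (c : ℕ × ℕ × ℕ → ℂ)
    (hc : ∀ rho ∈ rs, ∑ t ∈ cs.toFinset, (rho t : ℂ) * c t = 0) : ∀ t ∈ cs, c t = 0 := by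
  simp only [checkL, Bool.and_eq_true, forceL_eq, forceN_eq, List.all_eq_true,
    decide_eq_true_eq] at h
  obtain ⟨hlen, h⟩ := h
  have hb : ∀ u : {t // t ∈ cs.toFinset}, ∃ n : ℕ, ∀ d ∈ cs,
      dotL (digs 85 n) (rs.map fun rho => rho d) % 7 = if u.1 = d then 1 else 0 := by
    rintro ⟨u, hu⟩
    rw [List.mem_toFinset] at hu
    obtain ⟨k, hk, rfl⟩ := List.getElem_of_mem hu
    refine ⟨Bs[k], fun d hd => ?_⟩
    have hm : (cs[k], Bs[k]) ∈ cs.zip Bs := by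
      have hk' : k < (cs.zip Bs).length := by simp; omega
      have := List.getElem_mem hk'
      simpa using this
    have h1 := h _ hm
    rw [dotL_packL cs rs (fun rho c => rho c % 7)] at h1
    have h2 := okPack_sound _ _ _ (fun c => lt_of_le_of_lt
      (dotL_bound 85 Bs[k] _ (by
        intro a ha
        obtain ⟨rho, _, rfl⟩ := List.mem_map.1 ha
        have := Nat.mod_lt (rho c) (show 7 > 0 by norm_num)
        omega)) (by norm_num)) h1 d hd
    rw [dotL_mod rs (fun rho => rho d)] at h2
    exact h2
  choose n hn using hb
  let M : Matrix {t // t ∈ cs.toFinset} {t // t ∈ cs.toFinset} ℤ :=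
    Matrix.of fun u d => ((dotL (digs 85 (n u)) (rs.map fun rho => rho d.1) : ℕ) : ℤ)
  have hM : M.map (Int.castRingHom (ZMod 7)) = 1 := by
    ext u d
    have h1 := hn u d.1 (List.mem_toFinset.1 d.2)
    simp only [M, Matrix.map_apply, Matrix.of_apply, Matrix.one_apply, eq_intCast, Int.cast_natCast]
    rw [← ZMod.natCast_mod, h1]
    by_cases hud : u = d
    · simp [hud]
    · have : u.1 ≠ d.1 := fun e => hud (Subtype.ext e)
      simp [hud, this]
  have hdet : M.det ≠ 0 := by
    intro h0
    have h1 := (Int.castRingHom (ZMod 7)).map_det M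
    rw [h0] at h1
    rw [RingHom.mapMatrix_apply, hM] at h1
    rw [map_zero, Matrix.det_one] at h1
    exact absurd h1 (by decide)
  have hdetC : (M.map (Int.castRingHom ℂ)).det ≠ 0 := by
    have h1 := (Int.castRingHom ℂ).map_det M
    rw [RingHom.mapMatrix_apply] at h1
    rw [← h1]
    simpa using hdet
  have hz : (fun t : {t // t ∈ cs.toFinset} => c t.1) = 0 := by
    apply Matrix.eq_zero_of_mulVec_eq_zero hdetC
    ext u
    simp only [Matrix.mulVec, dotProduct, M, Matrix.map_apply, Matrix.of_apply, eq_intCast, Int.cast_natCast,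
      Pi.zero_apply]
    have := dotL_comb cs.toFinset rs (digs 85 (n u)) c hc
    rw [← Finset.sum_coe_sort] at this
    exact this
  intro t ht
  exact congrFun hz ⟨t, List.mem_toFinset.2 ht⟩
/-! ### Openness of triviality of a common kernel -/

theorem open_kernel {σ X ι : Type*} [Fintype ι] [DecidableEq ι]
    (Lam : X → ι → MvPolynomial σ ℂ) (v0 : σ → ℂ)
    (h : ∀ c : ι → ℂ, (∀ x, ∑ i, eval v0 (Lam x i) * c i = 0) → c = 0) :
    ∃ P : MvPolynomial σ ℂ, eval v0 P ≠ 0 ∧ ∀ v : σ → ℂ, eval v P ≠ 0 →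
      ∀ c : ι → ℂ, (∀ x, ∑ i, eval v (Lam x i) * c i = 0) → c = 0 := by
  classical
  let rho : X → (ι → ℂ) := fun x i => eval v0 (Lam x i)
  have hspan : Submodule.span ℂ (Set.range rho) = ⊤ := by
    by_contra hne
    obtain ⟨f, hf0, hf⟩ := Submodule.exists_le_ker_of_lt_top _ (lt_top_iff_ne_top.2 hne)
    apply hf0
    have hfe : ∀ w : ι → ℂ, f w = ∑ i, w i * f (Pi.single i 1) := by
      intro w
      conv_lhs => rw [pi_eq_sum_univ' w]
      simp [map_sum]
    have hc := h (fun i => f (Pi.single i 1)) (fun x => by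
      have h1 : f (rho x) = 0 := hf (Submodule.subset_span ⟨x, rfl⟩)
      rw [hfe] at h1
      exact h1)
    ext w
    simp [congrFun hc w]
  obtain ⟨b, hbsub, hbspan, hbli⟩ := exists_linearIndependent ℂ (Set.range rho)
  rw [hspan] at hbspan
  let B : Module.Basis b ℂ (ι → ℂ) := Module.Basis.mk hbli (by simp [hbspan])
  let e : ι ≃ b := (Pi.basisFun ℂ ι).indexEquiv B
  have hx : ∀ i, ∃ x, rho x = (e i : ι → ℂ) := fun i => hbsub (e i).2
  choose x hx using hx
  let M : Matrix ι ι (MvPolynomial σ ℂ) := Matrix.of fun k i => Lam (x k) i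
  have hev : ∀ v : σ → ℂ, eval v M.det = (Matrix.of fun k i => eval v (Lam (x k) i)).det := by
    intro v
    rw [RingHom.map_det]
    rfl
  refine ⟨M.det, ?_, ?_⟩
  · rw [hev]
    have h1 : LinearIndependent ℂ (Matrix.of fun k i => eval v0 (Lam (x k) i)).row := by
      have h2 : LinearIndependent ℂ (fun i => (e i : ι → ℂ)) := hbli.comp e e.injective
      convert h2 using 1
      funext i
      rw [← hx]
      rfl
    rw [Matrix.linearIndependent_rows_iff_isUnit, Matrix.isUnit_iff_isUnit_det] at h1
    exact h1.ne_zero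
  · intro v hv c hc
    rw [hev] at hv
    apply Matrix.eq_zero_of_mulVec_eq_zero hv
    ext k
    exact hc (x k)

/-! ### Monomials of degree ten -/

def allT : Finset (ℕ × ℕ × ℕ) :=
  (Finset.range 11 ×ˢ Finset.range 11 ×ˢ Finset.range 11).filter
    fun t => t.1 + t.2.1 ≤ 10 ∧ t.2.2 ≤ t.1

def mono (t : ℕ × ℕ × ℕ) : Fin 4 →₀ ℕ :=
  Finsupp.equivFunOnFinite.symm ![10 - t.1 - t.2.1, t.2.1, t.1 - t.2.2, t.2.2]

@[simp] theorem mono_0 (t : ℕ × ℕ × ℕ) : mono t 0 = 10 - t.1 - t.2.1 := rfl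
@[simp] theorem mono_1 (t : ℕ × ℕ × ℕ) : mono t 1 = t.2.1 := rfl
@[simp] theorem mono_2 (t : ℕ × ℕ × ℕ) : mono t 2 = t.1 - t.2.2 := rfl
@[simp] theorem mono_3 (t : ℕ × ℕ × ℕ) : mono t 3 = t.2.2 := rfl

theorem mem_allT (t : ℕ × ℕ × ℕ) : t ∈ allT ↔ t.1 + t.2.1 ≤ 10 ∧ t.2.2 ≤ t.1 := by
  simp only [allT, Finset.mem_filter, Finset.mem_product, Finset.mem_range]
  omega

theorem mono_inj : Set.InjOn mono (allT : Set (ℕ × ℕ × ℕ)) := by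
  intro s hs t ht hst
  rw [Finset.mem_coe, mem_allT] at hs ht
  have h1 := DFunLike.congr_fun hst 1
  have h2 := DFunLike.congr_fun hst 2
  have h3 := DFunLike.congr_fun hst 3
  simp only [mono_1, mono_2, mono_3] at h1 h2 h3
  ext
  · omega
  · exact h1
  · exact h3

theorem exists_mono (m : Fin 4 →₀ ℕ) (hm : m.degree = 10) : ∃ t ∈ allT, mono t = m := by
  rw [Finsupp.degree_eq_sum, Fin.sum_univ_four] at hm
  refine ⟨(m 2 + m 3, m 1, m 3), ?_, ?_⟩
  · rw [mem_allT]; simp; omega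
  · ext i
    fin_cases i
    · simp; omega
    · simp
    · simp
    · simp

theorem hom_sum (F : R3) (hF : F.IsHomogeneous 10) :
    F = ∑ t ∈ allT, monomial (mono t) (coeff (mono t) F) := by
  rw [← Finset.sum_image (g := mono) (f := fun m => monomial m (coeff m F)) mono_inj]
  conv_lhs => rw [F.as_sum]
  apply Finset.sum_subset
  · intro m hm
    rw [mem_support_iff] at hm
    have hd : m.degree = 10 := by
      by_contra hne
      exact hm (hF.coeff_eq_zero hne)
    obtain ⟨t, ht, rfl⟩ := exists_mono m hd
    exact Finset.mem_image_of_mem _ ht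
  · intro m _ hm
    rw [notMem_support_iff] at hm
    simp [hm]

/-! ### Taylor coefficient functionals -/

def lam {R : Type*} [CommRing R] (p : Fin 4 → R) (k1 k2 : ℕ) (m : Fin 4 →₀ ℕ) : R :=
  p 0 ^ m 0 * (p 1 ^ (m 1 - k1) * (Nat.choose (m 1) k1 : R)) * p 2 ^ m 2 *
    (p 3 ^ (m 3 - k2) * (Nat.choose (m 3) k2 : R))

theorem map_lam {R S : Type*} [CommRing R] [CommRing S] (f : R →+* S) (p : Fin 4 → R)
    (k1 k2 : ℕ) (m : Fin 4 →₀ ℕ) : f (lam p k1 k2 m) = lam (fun j => f (p j)) k1 k2 m := by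
  simp [lam]

def psi (p : Fin 4 → ℂ) : R3 →ₐ[ℂ] Polynomial (Polynomial ℂ) :=
  aeval ![Polynomial.C (Polynomial.C (p 0)), Polynomial.C (Polynomial.X + Polynomial.C (p 1)),
    Polynomial.C (Polynomial.C (p 2)), Polynomial.X + Polynomial.C (Polynomial.C (p 3))]

theorem psi_monomial (p : Fin 4 → ℂ) (m : Fin 4 →₀ ℕ) (c : ℂ) (k1 k2 : ℕ) :
    ((psi p (monomial m c)).coeff k2).coeff k1 = lam p k1 k2 m * c := by
  have h1 : psi p (monomial m c) = Polynomial.C (Polynomial.C c *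
      (Polynomial.C (p 0 ^ m 0) * (Polynomial.X + Polynomial.C (p 1)) ^ m 1 *
        Polynomial.C (p 2 ^ m 2))) * (Polynomial.X + Polynomial.C (Polynomial.C (p 3))) ^ m 3 := by
    rw [psi, aeval_monomial, Finsupp.prod_fintype _ _ (by simp), Fin.prod_univ_four]
    have h2 : (algebraMap ℂ (Polynomial (Polynomial ℂ))) c = Polynomial.C (Polynomial.C c) := rfl
    rw [h2]
    simp
    ring
  rw [h1, Polynomial.coeff_C_mul, Polynomial.coeff_X_add_C_pow]
  have h3 : (Polynomial.C (p 3) ^ (m 3 - k2) * ((m 3).choose k2 : Polynomial ℂ)) =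
      Polynomial.C (p 3 ^ (m 3 - k2) * ((m 3).choose k2 : ℂ)) := by simp
  rw [h3, Polynomial.coeff_mul_C, Polynomial.coeff_C_mul, Polynomial.coeff_mul_C,
    Polynomial.coeff_C_mul, Polynomial.coeff_X_add_C_pow, lam]
  ring

theorem mulJ (f g : Polynomial (Polynomial ℂ)) (m n : ℕ)
    (hf : ∀ k1 k2, k1 + k2 < m → (f.coeff k2).coeff k1 = 0)
    (hg : ∀ k1 k2, k1 + k2 < n → (g.coeff k2).coeff k1 = 0) :
    ∀ k1 k2, k1 + k2 < m + n → ((f * g).coeff k2).coeff k1 = 0 := by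
  intro k1 k2 hk
  rw [Polynomial.coeff_mul, Polynomial.finsetSum_coeff]
  apply Finset.sum_eq_zero
  intro x hx
  rw [Polynomial.coeff_mul]
  apply Finset.sum_eq_zero
  intro y hy
  rw [Finset.HasAntidiagonal.mem_antidiagonal] at hx hy
  by_cases h : y.1 + x.1 < m
  · rw [hf _ _ h, zero_mul]
  · rw [hg y.2 x.2 (by omega), mul_zero]

def idealJ (n : ℕ) : Ideal (Polynomial (Polynomial ℂ)) where
  carrier := {f | ∀ k1 k2, k1 + k2 < n → (f.coeff k2).coeff k1 = 0}
  add_mem' := by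
    intro f g hf hg k1 k2 hk
    simp [hf k1 k2 hk, hg k1 k2 hk]
  zero_mem' := by
    intro k1 k2 _
    simp
  smul_mem' := by
    intro f g hg k1 k2 hk
    exact mulJ f g 0 n (by simp) hg k1 k2 (by simpa using hk)

theorem psi_const (p : Fin 4 → ℂ) (F : R3) : ((psi p F).coeff 0).coeff 0 = eval p F := by
  have h : (Polynomial.constantCoeff.comp (Polynomial.constantCoeff.comp
      (psi p : R3 →+* Polynomial (Polynomial ℂ)))) = eval p := by
    apply MvPolynomial.ringHom_ext
    · intro r
      simp [psi]
    · intro i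
      fin_cases i <;> simp [psi]
  exact DFunLike.congr_fun h F

theorem lineIdeal_pow_le (L : Submodule ℂ C4) (p : C4) (hp : p ∈ L) (n : ℕ) :
    lineIdeal L ^ n ≤ (idealJ n).comap (psi p) := by
  induction n with
  | zero =>
    intro F _ k1 k2 hk
    omega
  | succ n ih =>
    rw [pow_succ, Ideal.mul_le]
    intro F hF G hG
    have hF' := ih hF
    rw [Ideal.mem_comap] at hF' ⊢
    intro k1 k2 hk
    rw [map_mul]
    refine mulJ _ _ n 1 hF' ?_ k1 k2 (by simpa using hk)
    intro l1 l2 hl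
    have h1 : l1 = 0 := by omega
    have h2 : l2 = 0 := by omega
    subst h1 h2
    rw [psi_const]
    exact hG p hp

theorem lam_vanish (L : Submodule ℂ C4) (p : C4) (hp : p ∈ L) (n : ℕ) (F : R3)
    (hF : F ∈ lineIdeal L ^ n) (hF10 : F.IsHomogeneous 10) (k1 k2 : ℕ) (hk : k1 + k2 < n) :
    ∑ t ∈ allT, lam p k1 k2 (mono t) * coeff (mono t) F = 0 := by
  have h := lineIdeal_pow_le L p hp n hF k1 k2 hk
  have hs : psi p F = ∑ t ∈ allT, psi p (monomial (mono t) (coeff (mono t) F)) := by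
    conv_lhs => rw [hom_sum F hF10]
    rw [map_sum]
  change ((psi p F).coeff k2).coeff k1 = 0 at h
  rw [hs, Polynomial.finsetSum_coeff, Polynomial.finsetSum_coeff] at h
  simpa only [psi_monomial] using h
/-! ### The special configuration -/

def zeta : ℂ := Complex.exp (2 * Real.pi * Complex.I / (5 : ℕ))

theorem zeta_prim : IsPrimitiveRoot zeta 5 := Complex.isPrimitiveRoot_exp 5 (by norm_num)

def vv0 (i : Fin 9) (k : Fin 2) : Fin 4 → ℂ :=
  if i.1 < 4 then
    (if k = 0 then ![1, (alphaN i.1 : ℂ), 0, 0] else ![0, 0, 1, (betaN i.1 : ℂ)])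
  else
    (if k = 0 then ![1, 0, zeta ^ (i.1 - 4), 0] else ![0, 1, 0, zeta ^ (i.1 - 4)])

def pt (v : Fin 9 → Fin 2 → Fin 4 → ℂ) (i : Fin 9) (t : ℂ) : Fin 4 → ℂ :=
  fun j => v i 0 j + t * v i 1 j

def mult : Fin 9 → ℕ := ![3, 3, 3, 3, 1, 1, 1, 1, 1]

/-- A polynomial function which vanishes identically has vanishing coefficients. -/
theorem sep {T : Type*} (s : Finset T) (f : T → ℂ) (n : T → ℕ)
    (h : ∀ t : ℂ, ∑ x ∈ s, f x * t ^ n x = 0) (e : ℕ) :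
    ∑ x ∈ s, (if n x = e then f x else 0) = 0 := by
  have hP : (∑ x ∈ s, Polynomial.monomial (n x) (f x)) = 0 := by
    apply Polynomial.funext
    intro t
    simpa [Polynomial.eval_finsetSum] using h t
  have := congrArg (fun P => Polynomial.coeff P e) hP
  simpa [Polynomial.finsetSum_coeff, Polynomial.coeff_monomial] using this

theorem geom (n : ℕ) :
    ∑ l ∈ Finset.range 5, zeta ^ (l * n) = if n % 5 = 0 then 5 else 0 := by
  have h1 : ∑ l ∈ Finset.range 5, zeta ^ (l * n) = ∑ l ∈ Finset.range 5, (zeta ^ n) ^ l := by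
    apply Finset.sum_congr rfl
    intro l _
    rw [← pow_mul, mul_comm]
  rw [h1]
  split_ifs with h
  · have : zeta ^ n = 1 := (zeta_prim.pow_eq_one_iff_dvd n).2 (Nat.dvd_of_mod_eq_zero h)
    simp [this]
  · have hne : zeta ^ n ≠ 1 := fun h' =>
      h (Nat.mod_eq_zero_of_dvd ((zeta_prim.pow_eq_one_iff_dvd n).1 h'))
    rw [geom_sum_eq hne, ← pow_mul, mul_comm, pow_mul, zeta_prim.pow_eq_one]
    simp

theorem colsL_toFinset (r : ℕ) :
    (colsL r).toFinset = allT.filter fun t => t.1 % 5 = r := by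
  ext ⟨b, i, j⟩
  simp only [colsL, List.mem_toFinset, List.mem_flatMap, List.mem_filter, List.mem_range,
    List.mem_map, Prod.mk.injEq, Finset.mem_filter, mem_allT, decide_eq_true_eq]
  constructor
  · rintro ⟨b', ⟨h1, h2⟩, i', h3, j', h4, rfl, rfl, rfl⟩
    omega
  · intro h
    exact ⟨b, by omega, i, by omega, j, by omega, rfl, rfl, rfl⟩

theorem special (c : ℕ × ℕ × ℕ → ℂ)
    (h : ∀ (i : Fin 9) (t : ℂ) (k1 k2 : ℕ), k1 + k2 < mult i →
      ∑ x ∈ allT, lam (pt vv0 i t) k1 k2 (mono x) * c x = 0)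
    (hn : c (5, 2, 2) = 0) : ∀ x ∈ allT, c x = 0 := by
  -- the derivative conditions
  have hT : ∀ b q k1 k2, q < 4 → k1 + k2 < 3 →
      ∑ x ∈ allT, (tEntry b q k1 k2 x : ℂ) * c x = 0 := by
    intro b q k1 k2 hq hk
    have h1 := sep allT (fun x => ((x.2.1.choose k1 * alphaN q ^ (x.2.1 - k1) *
      (x.2.2.choose k2 * betaN q ^ (x.2.2 - k2)) : ℕ) : ℂ) * c x) (fun x => x.1) (by
        intro t
        have hm : mult ⟨q, by omega⟩ = 3 := by
          interval_cases q <;> rfl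
        have h2 := h ⟨q, by omega⟩ t k1 k2 (by rw [hm]; exact hk)
        have h3 := congrArg (fun z => t ^ k2 * z) h2
        simp only [mul_zero, Finset.mul_sum] at h3
        rw [← h3]
        apply Finset.sum_congr rfl
        intro x hx
        rw [mem_allT] at hx
        have e0 : pt vv0 ⟨q, by omega⟩ t 0 = 1 := by simp [pt, vv0, hq]
        have e1 : pt vv0 ⟨q, by omega⟩ t 1 = alphaN q := by simp [pt, vv0, hq]
        have e2 : pt vv0 ⟨q, by omega⟩ t 2 = t := by simp [pt, vv0, hq]
        have e3 : pt vv0 ⟨q, by omega⟩ t 3 = t * betaN q := by simp [pt, vv0, hq]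
        simp only [lam, e0, e1, e2, e3, mono_0, mono_1, mono_2, mono_3]
        by_cases hk2 : k2 ≤ x.2.2
        · have ht : t ^ x.1 = t ^ k2 * t ^ (x.1 - x.2.2) * t ^ (x.2.2 - k2) := by
            rw [← pow_add, ← pow_add]
            congr 1
            omega
          rw [ht, mul_pow]
          push_cast
          ring
        · have : x.2.2.choose k2 = 0 := Nat.choose_eq_zero_of_lt (by omega)
          simp [this]) b
    rw [← h1]
    apply Finset.sum_congr rfl
    intro x _
    unfold tEntry
    split_ifs <;> simp
  -- the conditions along the last five lines
  have hD : ∀ r e, r < 5 →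
      ∑ x ∈ allT, (if x.1 % 5 = r then (dEntry e x : ℂ) * c x else 0) = 0 := by
    intro r e hr
    have h1 : ∀ l < 5, ∑ x ∈ allT, (if x.2.1 + x.2.2 = e then c x * zeta ^ (l * x.1) else 0) = 0 := by
      intro l hl
      apply sep allT (fun x => c x * zeta ^ (l * x.1)) (fun x => x.2.1 + x.2.2)
      intro t
      have hm : mult ⟨l + 4, by omega⟩ = 1 := by
        interval_cases l <;> rfl
      have h2 := h ⟨l + 4, by omega⟩ t 0 0 (by rw [hm]; norm_num)
      rw [← h2]
      apply Finset.sum_congr rfl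
      intro x hx
      rw [mem_allT] at hx
      have e0 : pt vv0 ⟨l + 4, by omega⟩ t 0 = 1 := by simp [pt, vv0]
      have e1 : pt vv0 ⟨l + 4, by omega⟩ t 1 = t := by simp [pt, vv0]
      have e2 : pt vv0 ⟨l + 4, by omega⟩ t 2 = zeta ^ l := by simp [pt, vv0]
      have e3 : pt vv0 ⟨l + 4, by omega⟩ t 3 = t * zeta ^ l := by simp [pt, vv0]
      simp only [lam, e0, e1, e2, e3, mono_0, mono_1, mono_2, mono_3]
      have ht : zeta ^ (l * x.1) = (zeta ^ l) ^ (x.1 - x.2.2) * (zeta ^ l) ^ x.2.2 := by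
        rw [← pow_add, ← pow_mul]
        congr 2
        omega
      rw [ht]
      simp only [one_pow, tsub_zero, Nat.choose_zero_right, Nat.cast_one, mul_pow, pow_add]
      ring
    have h2 : ∑ l ∈ Finset.range 5, zeta ^ (l * (5 - r)) *
        ∑ x ∈ allT, (if x.2.1 + x.2.2 = e then c x * zeta ^ (l * x.1) else 0) = 0 := by
      apply Finset.sum_eq_zero
      intro l hl
      rw [h1 l (Finset.mem_range.1 hl), mul_zero]
    simp only [Finset.mul_sum] at h2
    rw [Finset.sum_comm] at h2
    have h3 : ∀ x ∈ allT, ∑ l ∈ Finset.range 5, zeta ^ (l * (5 - r)) *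
        (if x.2.1 + x.2.2 = e then c x * zeta ^ (l * x.1) else 0) =
        5 * (if x.1 % 5 = r then (dEntry e x : ℂ) * c x else 0) := by
      intro x _
      unfold dEntry
      by_cases he : x.2.1 + x.2.2 = e
      · simp only [he, if_true]
        have h4 : ∀ l ∈ Finset.range 5, zeta ^ (l * (5 - r)) * (c x * zeta ^ (l * x.1)) =
            c x * zeta ^ (l * (x.1 + (5 - r))) := by
          intro l _
          rw [mul_add, pow_add]
          ring
        rw [Finset.sum_congr rfl h4, ← Finset.mul_sum, geom]
        by_cases hb : x.1 % 5 = r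
        · have : (x.1 + (5 - r)) % 5 = 0 := by omega
          simp [hb, this, mul_comm]
        · have : ¬ (x.1 + (5 - r)) % 5 = 0 := by omega
          simp [hb, this]
      · simp [he]
    rw [Finset.sum_congr rfl h3, ← Finset.mul_sum] at h2
    simpa using h2
  intro x hx
  have key : ∀ r < 5, ∀ rho ∈ rowsL r, ∑ t ∈ (colsL r).toFinset, (rho t : ℂ) * c t = 0 := by
    intro r hr rho hrho
    rw [colsL_toFinset r, Finset.sum_filter]
    simp only [rowsL, List.mem_append, List.mem_flatMap, List.mem_filter, List.mem_range,
      List.mem_map, List.mem_singleton, decide_eq_true_eq] at hrho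
    rcases hrho with ⟨b, ⟨_, hb⟩, q, hq, k, hk, rfl⟩ | ⟨e, _, rfl⟩ | rfl
    · have hk' : k.1 + k.2 < 3 := by
        revert k
        decide
      refine Eq.trans (Finset.sum_congr rfl ?_) (hT b q k.1 k.2 hq hk')
      intro t _
      split_ifs with h1
      · rfl
      · have : ¬ t.1 = b := by
          rintro rfl
          exact h1 hb
        simp [tEntry, this]
    · exact hD r e hr
    · apply Finset.sum_eq_zero
      intro t _
      unfold nEntry
      by_cases ht : t = (5, 2, 2)
      · simp [ht, hn]
      · simp [ht]
  have hmem : ∀ r < 5, x.1 % 5 = r → x ∈ colsL r := by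
    intro r hr h1
    rw [← List.mem_toFinset, colsL_toFinset r, Finset.mem_filter]
    exact ⟨hx, h1⟩
  have hlt : x.1 % 5 < 5 := Nat.mod_lt _ (by norm_num)
  obtain hr | hr | hr | hr | hr : x.1 % 5 = 0 ∨ x.1 % 5 = 1 ∨ x.1 % 5 = 2 ∨ x.1 % 5 = 3 ∨
      x.1 % 5 = 4 := by omega
  · exact checkL_sound _ _ _ check0 c (key 0 (by norm_num)) x (hmem 0 (by norm_num) hr)
  · exact checkL_sound _ _ _ check1 c (key 1 (by norm_num)) x (hmem 1 (by norm_num) hr)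
  · exact checkL_sound _ _ _ check2 c (key 2 (by norm_num)) x (hmem 2 (by norm_num) hr)
  · exact checkL_sound _ _ _ check3 c (key 3 (by norm_num)) x (hmem 3 (by norm_num) hr)
  · exact checkL_sound _ _ _ check4 c (key 4 (by norm_num)) x (hmem 4 (by norm_num) hr)

/-! ### The upper bound for general lines -/

theorem upper : ∃ P : MvPolynomial (Fin 9 × Fin 2 × Fin 4) ℂ, P ≠ 0 ∧
    ∀ v : Fin 9 → Fin 2 → C4, eval (fun p => v p.1 p.2.1 p.2.2) P ≠ 0 →
      ∀ F ∈ linSys 10 (fun i => Submodule.span ℂ {v i 0, v i 1}) ![3, 3, 3, 3, 1, 1, 1, 1, 1],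
        coeff (mono (5, 2, 2)) F = 0 → F = 0 := by
  let Lam : Option {x : Fin 9 × ℂ × ℕ × ℕ // x.2.2.1 + x.2.2.2 < mult x.1} →
      {t // t ∈ allT} → MvPolynomial (Fin 9 × Fin 2 × Fin 4) ℂ := fun x t =>
    match x with
    | none => if t.1 = (5, 2, 2) then 1 else 0
    | some x => lam (fun j => X (x.1.1, 0, j) + C x.1.2.1 * X (x.1.1, 1, j)) x.1.2.2.1 x.1.2.2.2
        (mono t.1)
  have hnone : ∀ (v : Fin 9 → Fin 2 → C4) (c : {t // t ∈ allT} → ℂ),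
      ∑ t, eval (fun p => v p.1 p.2.1 p.2.2) (Lam none t) * c t =
        c ⟨(5, 2, 2), by rw [mem_allT]; norm_num⟩ := by
    intro v c
    rw [Finset.sum_eq_single ⟨(5, 2, 2), by rw [mem_allT]; norm_num⟩]
    · simp [Lam]
    · intro t _ ht
      have : t.1 ≠ (5, 2, 2) := fun e => ht (Subtype.ext e)
      simp [Lam, this]
    · simp
  have hsome : ∀ (v : Fin 9 → Fin 2 → C4) (x) (t : {t // t ∈ allT}),
      eval (fun p => v p.1 p.2.1 p.2.2) (Lam (some x) t) =
        lam (pt v x.1.1 x.1.2.1) x.1.2.2.1 x.1.2.2.2 (mono t.1) := by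
    intro v x t
    simp only [Lam, map_lam]
    congr 1
    funext j
    simp [pt]
  obtain ⟨P, hP0, hP⟩ := open_kernel Lam (fun p => vv0 p.1 p.2.1 p.2.2) (by
    intro c hc
    let c' : ℕ × ℕ × ℕ → ℂ := fun t => if h : t ∈ allT then c ⟨t, h⟩ else 0
    have hc' : ∀ t : {t // t ∈ allT}, c' t.1 = c t := by
      intro t
      simp [c', t.2]
    have := special c' (by
      intro i t k1 k2 hk
      have h1 := hc (some ⟨(i, t, k1, k2), hk⟩)
      simp only [hsome] at h1
      rw [← Finset.sum_coe_sort]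
      simpa only [hc'] using h1) (by
      have h1 := hc none
      rw [hnone] at h1
      rw [← h1, ← hc'])
    ext t
    rw [← hc', this t.1 t.2]
    rfl)
  refine ⟨P, fun h => hP0 (by simp [h]), ?_⟩
  intro v hv F hF hF0
  rw [linSys, Submodule.mem_inf, Submodule.mem_iInf] at hF
  obtain ⟨hhom, hF⟩ := hF
  rw [mem_homogeneousSubmodule] at hhom
  have h0 := hP _ hv (fun t => coeff (mono t.1) F) (by
    rintro (_ | x)
    · rw [hnone]
      exact hF0
    · simp only [hsome]
      rw [Finset.sum_coe_sort allT (fun t => lam (pt v x.1.1 x.1.2.1) x.1.2.2.1 x.1.2.2.2 (mono t) *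
        coeff (mono t) F)]
      refine lam_vanish (Submodule.span ℂ {v x.1.1 0, v x.1.1 1}) _ ?_ (mult x.1.1) F (hF x.1.1)
        hhom _ _ x.2
      have : pt v x.1.1 x.1.2.1 = v x.1.1 0 + x.1.2.1 • v x.1.1 1 := by
        ext j
        simp [pt]
      rw [this]
      exact Submodule.add_mem _ (Submodule.subset_span (by simp))
        (Submodule.smul_mem _ _ (Submodule.subset_span (by simp))))
  rw [hom_sum F hhom]
  apply Finset.sum_eq_zero
  intro t ht
  have := congrFun h0 ⟨t, ht⟩
  simp only [Pi.zero_apply] at this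
  rw [this, map_zero]
/-! ### The lower bound -/

theorem step_aux {V E : Type*} [AddCommGroup V] [Module ℂ V] [AddCommGroup E] [Module ℂ E]
    (W J : Submodule ℂ V) [FiniteDimensional ℂ W] (f : V →ₗ[ℂ] E) (T : Submodule ℂ E)
    [FiniteDimensional ℂ T] (d : ℕ) (hd : Module.finrank ℂ T ≤ d) (hT : W.map f ≤ T)
    (hJ : ∀ x ∈ W, f x = 0 → x ∈ J) :
    Module.finrank ℂ W ≤ Module.finrank ℂ ↥(W ⊓ J) + d := by
  have h1 := LinearMap.finrank_range_add_finrank_ker (f.domRestrict W)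
  have h2 : Module.finrank ℂ (LinearMap.range (f.domRestrict W)) ≤ d := by
    refine le_trans (Submodule.finrank_mono ?_) hd
    rw [LinearMap.range_domRestrict]
    exact hT
  have h3 : Module.finrank ℂ (LinearMap.ker (f.domRestrict W)) ≤ Module.finrank ℂ ↥(W ⊓ J) := by
    have h4 : Module.finrank ℂ ((LinearMap.ker (f.domRestrict W)).map W.subtype) =
        Module.finrank ℂ (LinearMap.ker (f.domRestrict W)) :=
      Submodule.finrank_map_subtype_eq _ _
    rw [← h4]
    apply Submodule.finrank_mono
    rintro _ ⟨x, hx, rfl⟩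
    exact ⟨x.2, hJ _ x.2 hx⟩
  omega

theorem count_aux {V ι : Type*} [AddCommGroup V] [Module ℂ V] [DecidableEq ι]
    (W : Submodule ℂ V) (J : ι → Submodule ℂ V) (d : ι → ℕ)
    (h : ∀ k, ∀ W' ≤ W, Module.finrank ℂ W' ≤ Module.finrank ℂ ↥(W' ⊓ J k) + d k)
    (s : Finset ι) :
    Module.finrank ℂ W ≤ Module.finrank ℂ ↥(W ⊓ ⨅ k ∈ s, J k) + ∑ k ∈ s, d k := by
  induction s using Finset.induction_on with
  | empty =>
    have h0 : (W ⊓ ⨅ k ∈ (∅ : Finset ι), J k) = W := by simp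
    rw [h0]
    simp
  | insert a s ha ih =>
    have h1 := h a (W ⊓ ⨅ k ∈ s, J k) inf_le_left
    have h2 : (W ⊓ ⨅ k ∈ insert a s, J k) = (W ⊓ ⨅ k ∈ s, J k) ⊓ J a := by
      rw [Finset.iInf_insert, inf_assoc, inf_comm (J a)]
    rw [h2, Finset.sum_insert ha]
    omega

theorem pow_span_pair {A : Type*} [CommRing A] [Algebra ℂ A] (x y : A) (n : ℕ) :
    (Submodule.span ℂ {x, y}) ^ n ≤
      Submodule.span ℂ {z | ∃ k l, k + l = n ∧ z = x ^ k * y ^ l} := by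
  induction n with
  | zero =>
    rw [pow_zero, Submodule.one_le]
    exact Submodule.subset_span ⟨0, 0, rfl, by simp⟩
  | succ n ih =>
    rw [pow_succ]
    refine le_trans (mul_le_mul' ih le_rfl) ?_
    rw [Submodule.span_mul_span]
    apply Submodule.span_mono
    rintro _ ⟨_, ⟨k, l, hkl, rfl⟩, w, hw, rfl⟩
    rcases hw with rfl | hw
    · exact ⟨k + 1, l, by omega, by simp only; ring⟩
    · rw [Set.mem_singleton_iff] at hw
      subst hw
      exact ⟨k, l + 1, by omega, by simp only; ring⟩

/-- Complement a linear form in a pencil. -/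
theorem pencil {A : Type*} [CommRing A] [Algebra ℂ A] (U0 U1 : A) (α β : ℂ)
    (h : α ≠ 0 ∨ β ≠ 0) : ∃ l' : A, U0 ∈ Submodule.span ℂ {β • U0 - α • U1, l'} ∧
      U1 ∈ Submodule.span ℂ {β • U0 - α • U1, l'} := by
  rcases h with h | h
  · refine ⟨U0, Submodule.subset_span (by simp), ?_⟩
    rw [Submodule.mem_span_pair]
    refine ⟨-α⁻¹, α⁻¹ * β, ?_⟩
    rw [smul_sub, smul_smul, smul_smul]
    have : -α⁻¹ * α = -1 := by field_simp
    rw [this]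
    module
  · refine ⟨U1, ?_, Submodule.subset_span (by simp)⟩
    rw [Submodule.mem_span_pair]
    refine ⟨β⁻¹, β⁻¹ * α, ?_⟩
    rw [smul_sub, smul_smul, smul_smul]
    have : β⁻¹ * β = 1 := by field_simp
    rw [this]
    module

def T8 : Finset (ℕ × ℕ × ℕ) := allT.filter fun t => 2 ≤ t.1 ∧ t.1 ≤ 8

theorem T8_card : T8.card = 224 := by decide +kernel

def S42 : Finset (ℕ × ℕ × ℕ) :=
  (Finset.range 9 ×ˢ Finset.range 3 ×ˢ Finset.range 3).filter
    fun t => 2 ≤ t.1 ∧ t.2.1 + t.2.2 ≤ 2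

theorem S42_card : S42.card = 42 := by decide +kernel

theorem triple_bound (U : Fin 4 → R3) (I : Ideal R3) (α β γ δ : ℂ)
    (h1 : α ≠ 0 ∨ β ≠ 0) (h2 : γ ≠ 0 ∨ δ ≠ 0)
    (hl : β • U 0 - α • U 1 ∈ I) (hm : δ • U 2 - γ • U 3 ∈ I) :
    ∃ S : Submodule ℂ R3, FiniteDimensional ℂ S ∧ Module.finrank ℂ S ≤ 42 ∧
      ∀ t ∈ T8, U 0 ^ mono t 0 * U 1 ^ mono t 1 * (U 2 ^ mono t 2 * U 3 ^ mono t 3) ∈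
        S ⊔ Submodule.restrictScalars ℂ (I ^ 3) := by
  obtain ⟨l', hl0, hl1⟩ := pencil (U 0) (U 1) α β h1
  obtain ⟨m', hm0, hm1⟩ := pencil (U 2) (U 3) γ δ h2
  set l := β • U 0 - α • U 1
  set m := δ • U 2 - γ • U 3
  let g : ℕ × ℕ × ℕ → R3 := fun t =>
    l ^ t.2.1 * l' ^ (10 - t.1 - t.2.1) * (m ^ t.2.2 * m' ^ (t.1 - t.2.2))
  classical
  refine ⟨Submodule.span ℂ ((S42.image g : Finset R3) : Set R3),
    FiniteDimensional.span_finset ℂ _, ?_, ?_⟩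
  · refine le_trans (finrank_span_finset_le_card _) ?_
    rw [← S42_card]
    exact Finset.card_image_le
  · intro t ht
    simp only [T8, Finset.mem_filter, mem_allT] at ht
    have hA : U 0 ^ mono t 0 * U 1 ^ mono t 1 ∈ (Submodule.span ℂ {l, l'}) ^ (10 - t.1) := by
      have : 10 - t.1 = mono t 0 + mono t 1 := by simp; omega
      rw [this, pow_add]
      exact Submodule.mul_mem_mul (Submodule.pow_mem_pow _ hl0 _) (Submodule.pow_mem_pow _ hl1 _)
    have hB : U 2 ^ mono t 2 * U 3 ^ mono t 3 ∈ (Submodule.span ℂ {m, m'}) ^ t.1 := by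
      have : t.1 = mono t 2 + mono t 3 := by simp; omega
      rw [this, pow_add]
      exact Submodule.mul_mem_mul (Submodule.pow_mem_pow _ hm0 _) (Submodule.pow_mem_pow _ hm1 _)
    have hC := Submodule.mul_mem_mul (pow_span_pair _ _ _ hA) (pow_span_pair _ _ _ hB)
    rw [Submodule.span_mul_span] at hC
    refine Submodule.span_le.2 ?_ hC
    rintro _ ⟨_, ⟨k, k', hk, rfl⟩, _, ⟨j, j', hj, rfl⟩, rfl⟩
    by_cases hkj : k + j ≤ 2
    · apply Submodule.mem_sup_left
      apply Submodule.subset_span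
      rw [Finset.mem_coe, Finset.mem_image]
      refine ⟨(t.1, k, j), ?_, ?_⟩
      · simp only [S42, Finset.mem_filter, Finset.mem_product, Finset.mem_range]
        omega
      · simp only [g]
        have e1 : 10 - t.1 - k = k' := by omega
        have e2 : t.1 - j = j' := by omega
        rw [e1, e2]
    · apply Submodule.mem_sup_right
      rw [Submodule.restrictScalars_mem]
      have h3 : l ^ k * m ^ j ∈ I ^ (k + j) := by
        rw [pow_add]
        exact Ideal.mul_mem_mul (Ideal.pow_mem_pow hl _) (Ideal.pow_mem_pow hm _)
      have h4 : l ^ k * m ^ j ∈ I ^ 3 := Ideal.pow_le_pow_right (by omega) h3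
      have h5 : l ^ k * l' ^ k' * (m ^ j * m' ^ j') = (l' ^ k' * m' ^ j') * (l ^ k * m ^ j) := by
        ring
      simp only
      rw [h5]
      exact Ideal.mul_mem_left _ _ h4

def phi (a b : C4) : R3 →ₐ[ℂ] Polynomial ℂ :=
  aeval fun k => Polynomial.C (a k) + Polynomial.X * Polynomial.C (b k)

theorem eval_phi (a b : C4) (F : R3) (t : ℂ) :
    (phi a b F).eval t = eval (fun k => a k + t * b k) F := by
  have h : ((Polynomial.evalRingHom t).comp (phi a b : R3 →+* Polynomial ℂ)) =
      eval (fun k => a k + t * b k) := by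
    apply MvPolynomial.ringHom_ext
    · intro r
      simp [phi]
    · intro i
      simp [phi]
      ring
  exact DFunLike.congr_fun h F

theorem eval_smul_hom (F : R3) (hF : F.IsHomogeneous 10) (s : ℂ) (x : C4) :
    eval (fun k => s * x k) F = s ^ 10 * eval x F := by
  rw [hom_sum F hF, map_sum, map_sum, Finset.mul_sum]
  apply Finset.sum_congr rfl
  intro t ht
  rw [mem_allT] at ht
  rw [eval_monomial, eval_monomial, Finsupp.prod_fintype _ _ (by simp),
    Finsupp.prod_fintype _ _ (by simp), Fin.prod_univ_four, Fin.prod_univ_four]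
  have h10 : 10 = mono t 0 + mono t 1 + mono t 2 + mono t 3 := by
    simp
    omega
  rw [show s ^ 10 = s ^ (mono t 0 + mono t 1 + mono t 2 + mono t 3) from
    congrArg (fun n => s ^ n) h10]
  ring

theorem line_mem (a b : C4) (F : R3) (hF : F.IsHomogeneous 10)
    (h : ∀ k : Fin 11, (phi a b F).coeff k = 0) : F ∈ lineIdeal (Submodule.span ℂ {a, b}) := by
  have h0 : phi a b F = 0 := by
    ext n
    by_cases hn : n < 11
    · exact h ⟨n, hn⟩
    · rw [Polynomial.coeff_zero]
      apply Polynomial.coeff_eq_zero_of_natDegree_lt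
      have h1 := MvPolynomial.aeval_natDegree_le F hF.totalDegree_le
        (fun k => Polynomial.C (a k) + Polynomial.X * Polynomial.C (b k)) (n := 1) (by
          intro i
          compute_degree)
      have h2 : (phi a b F).natDegree ≤ 10 * 1 := h1
      omega
  have h1 : ∀ t : ℂ, eval (fun k => a k + t * b k) F = 0 := by
    intro t
    rw [← eval_phi, h0, Polynomial.eval_zero]
  have h2 : ∀ s t : ℂ, s ≠ 0 → eval (fun k => t * b k + s * a k) F = 0 := by
    intro s t hs
    have h3 := eval_smul_hom F hF s (fun k => a k + (t / s) * b k)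
    rw [h1, mul_zero] at h3
    rw [← h3]
    congr 2
    funext k
    field_simp
    ring
  have h3 : ∀ t, phi (fun k => t * b k) a F = 0 := by
    intro t
    have h4 : Polynomial.X * phi (fun k => t * b k) a F = 0 := by
      apply Polynomial.funext
      intro s
      rw [Polynomial.eval_mul, Polynomial.eval_X, eval_phi]
      by_cases hs : s = 0
      · simp [hs]
      · rw [h2 s t hs]
        simp
    simpa using h4
  intro v hv
  rw [Submodule.mem_span_pair] at hv
  obtain ⟨s, t, rfl⟩ := hv
  have h4 := eval_phi (fun k => t * b k) a F s
  rw [h3, Polynomial.eval_zero] at h4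
  rw [h4]
  congr 2
  funext k
  simp [add_comm]

theorem forms_mem (E : Fin 4 → C4) (U : Fin 4 → R3)
    (hU : ∀ (y : Fin 4 → ℂ) k, eval (∑ l, y l • E l) (U k) = y k) (L : Submodule ℂ C4)
    (α β γ δ : ℂ) (hle : L ≤ Submodule.span ℂ {α • E 0 + β • E 1, γ • E 2 + δ • E 3}) :
    β • U 0 - α • U 1 ∈ lineIdeal L ∧ δ • U 2 - γ • U 3 ∈ lineIdeal L := by
  have key : ∀ v ∈ L, ∃ s t : ℂ, eval v (U 0) = s * α ∧ eval v (U 1) = s * β ∧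
      eval v (U 2) = t * γ ∧ eval v (U 3) = t * δ := by
    intro v hv
    obtain ⟨s, t, rfl⟩ := Submodule.mem_span_pair.1 (hle hv)
    have hev : s • (α • E 0 + β • E 1) + t • (γ • E 2 + δ • E 3) =
        ∑ l, (![s * α, s * β, t * γ, t * δ] : Fin 4 → ℂ) l • E l := by
      rw [Fin.sum_univ_four]
      change _ = (s * α) • E 0 + (s * β) • E 1 + (t * γ) • E 2 + (t * δ) • E 3
      module
    refine ⟨s, t, ?_, ?_, ?_, ?_⟩ <;> rw [hev, hU] <;> rfl
  constructor
  · intro v hv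
    obtain ⟨s, t, h0, h1, h2, h3⟩ := key v hv
    rw [map_sub, smul_eval, smul_eval, h0, h1]
    ring
  · intro v hv
    obtain ⟨s, t, h0, h1, h2, h3⟩ := key v hv
    rw [map_sub, smul_eval, smul_eval, h2, h3]
    ring

set_option maxHeartbeats 1000000 in
theorem lower (a b : Fin 9 → C4) (E : Fin 4 → C4) (U : Fin 4 → R3)
    (hUhom : ∀ k, (U k).IsHomogeneous 1)
    (hU : ∀ (y : Fin 4 → ℂ) k, eval (∑ l, y l • E l) (U k) = y k)
    (hL : ∀ i : Fin 9, i.1 < 4 → ∃ α β γ δ : ℂ, (α ≠ 0 ∨ β ≠ 0) ∧ (γ ≠ 0 ∨ δ ≠ 0) ∧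
      Submodule.span ℂ {a i, b i} ≤
        Submodule.span ℂ {α • E 0 + β • E 1, γ • E 2 + δ • E 3}) :
    ∃ F ∈ linSys 10 (fun i => Submodule.span ℂ {a i, b i}) ![3, 3, 3, 3, 1, 1, 1, 1, 1],
      F ≠ 0 := by
  let g : {t // t ∈ T8} → R3 := fun t => aeval U (monomial (mono t.1) (1 : ℂ))
  have hg : ∀ t, g t = U 0 ^ mono t.1 0 * U 1 ^ mono t.1 1 *
      (U 2 ^ mono t.1 2 * U 3 ^ mono t.1 3) := by
    intro t
    simp only [g]
    rw [aeval_monomial, Finsupp.prod_fintype _ _ (by simp), Fin.prod_univ_four, map_one]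
    ring
  have hinj : Function.Injective (aeval U : R3 →ₐ[ℂ] R3) := by
    rw [injective_iff_map_eq_zero]
    intro F hF
    apply MvPolynomial.funext
    intro y
    have h1 : eval (∑ l, y l • E l) (aeval U F) = eval y F := by
      have h2 : ((eval (∑ l, y l • E l)).comp ((aeval U : R3 →ₐ[ℂ] R3) : R3 →+* R3)) =
          eval y := by
        apply MvPolynomial.ringHom_ext
        · intro r
          simp
        · intro i
          simp [hU y i]
      exact DFunLike.congr_fun h2 F
    rw [← h1, hF]
    simp
  have hli : LinearIndependent ℂ g := by
    have h1 : LinearIndependent ℂ (fun t : {t // t ∈ T8} =>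
        (monomial (mono t.1) (1 : ℂ) : R3)) := by
      have h2 := (basisMonomials (Fin 4) ℂ).linearIndependent.comp
        (fun t : {t // t ∈ T8} => mono t.1) (by
          intro s t hst
          apply Subtype.ext
          exact mono_inj (Finset.mem_coe.2 (Finset.mem_filter.1 s.2).1)
            (Finset.mem_coe.2 (Finset.mem_filter.1 t.2).1) hst)
      simpa [Function.comp_def] using h2
    exact h1.map' (aeval U : R3 →ₐ[ℂ] R3).toLinearMap (LinearMap.ker_eq_bot.2 hinj)
  let W : Submodule ℂ R3 := Submodule.span ℂ (Set.range g)
  have hWfin : FiniteDimensional ℂ W := FiniteDimensional.span_of_finite ℂ (Set.finite_range g)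
  have hWrank : Module.finrank ℂ W = 224 := by
    rw [finrank_span_eq_card hli, Fintype.card_coe, T8_card]
  have hWhom : W ≤ homogeneousSubmodule (Fin 4) ℂ 10 := by
    rw [Submodule.span_le]
    rintro _ ⟨t, rfl⟩
    rw [hg, SetLike.mem_coe, mem_homogeneousSubmodule]
    have ht := t.2
    simp only [T8, Finset.mem_filter, mem_allT] at ht
    have h1 := (((hUhom 0).pow (mono t.1 0)).mul ((hUhom 1).pow (mono t.1 1))).mul
      (((hUhom 2).pow (mono t.1 2)).mul ((hUhom 3).pow (mono t.1 3)))
    convert h1 using 1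
    simp
    omega
  let J : Fin 9 → Submodule ℂ R3 := fun i => Submodule.restrictScalars ℂ
    ((lineIdeal (Submodule.span ℂ {a i, b i})) ^ ((![3, 3, 3, 3, 1, 1, 1, 1, 1] : Fin 9 → ℕ) i))
  let d : Fin 9 → ℕ := ![42, 42, 42, 42, 11, 11, 11, 11, 11]
  have hstep : ∀ k, ∀ W' ≤ W,
      Module.finrank ℂ W' ≤ Module.finrank ℂ ↥(W' ⊓ J k) + d k := by
    intro k W' hW'
    have hfin : FiniteDimensional ℂ W' := Submodule.finiteDimensional_of_le hW'
    by_cases hk : k.1 < 4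
    · have hd : d k = 42 := by fin_cases k <;> simp_all [d]
      have hm : (![3, 3, 3, 3, 1, 1, 1, 1, 1] : Fin 9 → ℕ) k = 3 := by
        fin_cases k <;> simp_all
      have hJk : J k = Submodule.restrictScalars ℂ
          ((lineIdeal (Submodule.span ℂ {a k, b k})) ^ 3) := by
        rw [← hm]
      rw [hd, hJk]
      obtain ⟨α, β, γ, δ, h1, h2, hle⟩ := hL k hk
      obtain ⟨S, hS1, hS2, hS3⟩ := triple_bound U (lineIdeal (Submodule.span ℂ {a k, b k}))
        α β γ δ h1 h2 (forms_mem E U hU _ α β γ δ hle).1 (forms_mem E U hU _ α β γ δ hle).2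
      let J' := Submodule.restrictScalars ℂ ((lineIdeal (Submodule.span ℂ {a k, b k})) ^ 3)
      apply step_aux W' J' J'.mkQ (S.map J'.mkQ) 42
        (le_trans (Submodule.finrank_map_le _ _) hS2)
      · have hWS : W ≤ S ⊔ J' := by
          rw [Submodule.span_le]
          rintro _ ⟨t, rfl⟩
          rw [hg]
          exact hS3 t.1 t.2
        refine le_trans (Submodule.map_mono (le_trans hW' hWS)) ?_
        rw [Submodule.map_sup]
        simp
      · intro x _ hx
        simpa using hx
    · have hd : d k = 11 := by fin_cases k <;> simp_all [d]
      have hm : (![3, 3, 3, 3, 1, 1, 1, 1, 1] : Fin 9 → ℕ) k = 1 := by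
        fin_cases k <;> simp_all
      have hJk : J k = Submodule.restrictScalars ℂ
          (lineIdeal (Submodule.span ℂ {a k, b k})) := by
        rw [← pow_one (lineIdeal (Submodule.span ℂ {a k, b k})), ← hm]
      rw [hd, hJk]
      let f : R3 →ₗ[ℂ] (Fin 11 → ℂ) := LinearMap.pi fun n =>
        (Polynomial.lcoeff ℂ n.1) ∘ₗ (phi (a k) (b k)).toLinearMap
      apply step_aux W' _ f ⊤ 11 (by simp) le_top
      intro x hx hfx
      rw [Submodule.restrictScalars_mem]
      refine line_mem _ _ _ ((mem_homogeneousSubmodule _ _).1 (hWhom (hW' hx))) ?_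
      intro n
      exact congrFun hfx n
  have hcount := count_aux W J d hstep Finset.univ
  have hsum : ∑ k, d k = 223 := by decide
  rw [hWrank, hsum] at hcount
  have hpos : 0 < Module.finrank ℂ ↥(W ⊓ ⨅ k ∈ (Finset.univ : Finset (Fin 9)), J k) := by omega
  have hne : (W ⊓ ⨅ k ∈ (Finset.univ : Finset (Fin 9)), J k) ≠ ⊥ := by
    intro h
    rw [h] at hpos
    simp at hpos
  obtain ⟨F, hF, hF0⟩ := Submodule.exists_mem_ne_zero_of_ne_bot hne
  refine ⟨F, ?_, hF0⟩
  rw [linSys, Submodule.mem_inf]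
  refine ⟨hWhom hF.1, ?_⟩
  have h2 := hF.2
  simpa [J] using h2
/-! ### The two transversals of four lines -/

theorem eigen_two (N : Matrix (Fin 2) (Fin 2) ℂ) (h : N.trace ^ 2 - 4 * N.det ≠ 0) :
    ∃ (P : Matrix (Fin 2) (Fin 2) ℂ) (e : Fin 2 → ℂ), P.det ≠ 0 ∧
      N * P = P * Matrix.diagonal e := by
  obtain ⟨s, hs⟩ := IsAlgClosed.exists_pow_nat_eq (N.trace ^ 2 - 4 * N.det) (n := 2) (by norm_num)
  replace hs := hs.symm
  have hs0 : s ≠ 0 := by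
    rintro rfl
    apply h
    rw [hs]
    ring
  have hroot : ∀ e : ℂ, e ^ 2 - N.trace * e + N.det = 0 →
      ∃ p : Fin 2 → ℂ, p ≠ 0 ∧ N.mulVec p = e • p := by
    intro e he
    have hdet : (N - e • (1 : Matrix (Fin 2) (Fin 2) ℂ)).det = 0 := by
      rw [Matrix.det_fin_two] at he ⊢
      rw [Matrix.trace_fin_two] at he
      simp
      linear_combination he
    obtain ⟨p, hp, hp2⟩ := Matrix.exists_mulVec_eq_zero_iff.2 hdet
    refine ⟨p, hp, ?_⟩
    rw [Matrix.sub_mulVec, Matrix.smul_mulVec, Matrix.one_mulVec, sub_eq_zero] at hp2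
    exact hp2
  obtain ⟨p, hp, hpe⟩ := hroot ((N.trace + s) / 2) (by linear_combination (-1 / 4) * hs)
  obtain ⟨q, hq, hqe⟩ := hroot ((N.trace - s) / 2) (by linear_combination (-1 / 4) * hs)
  refine ⟨Matrix.of fun i j => (![p, q] : Fin 2 → Fin 2 → ℂ) j i,
    ![(N.trace + s) / 2, (N.trace - s) / 2], ?_, ?_⟩
  · intro hdet
    obtain ⟨x, hx, hx2⟩ := Matrix.exists_mulVec_eq_zero_iff.2 hdet
    have h1 : x 0 • p + x 1 • q = 0 := by
      ext i
      have := congrFun hx2 i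
      simp [Matrix.mulVec, dotProduct, Fin.sum_univ_two] at this
      simp
      linear_combination this
    have h2 := congrArg N.mulVec h1
    rw [Matrix.mulVec_add, Matrix.mulVec_smul, Matrix.mulVec_smul, hpe, hqe,
      Matrix.mulVec_zero] at h2
    have h3 : (s * x 1) • q = 0 := by
      have : (s * x 1) • q = ((N.trace + s) / 2) • (x 0 • p + x 1 • q) -
          (x 0 • ((N.trace + s) / 2) • p + x 1 • ((N.trace - s) / 2) • q) := by module
      rw [this, h1, h2]
      simp
    have hx1 : x 1 = 0 := by
      rcases smul_eq_zero.1 h3 with h4 | h4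
      · exact (mul_eq_zero.1 h4).resolve_left hs0
      · exact absurd h4 hq
    have hx0 : x 0 = 0 := by
      rw [hx1, zero_smul, add_zero] at h1
      exact (smul_eq_zero.1 h1).resolve_right hp
    apply hx
    ext i
    fin_cases i
    · exact hx0
    · exact hx1
  · ext i j
    rw [Matrix.mul_diagonal, Matrix.mul_apply, Fin.sum_univ_two]
    fin_cases j
    · have := congrFun hpe i
      simp [Matrix.mulVec, dotProduct, Fin.sum_univ_two] at this
      simp
      linear_combination this
    · have := congrFun hqe i
      simp [Matrix.mulVec, dotProduct, Fin.sum_univ_two] at this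
      simp
      linear_combination this

theorem span_pair_le (a b x y : C4) (D r0 r1 s0 s1 : ℂ) (hD : D ≠ 0)
    (hr : r0 * s1 - s0 * r1 ≠ 0) (hx : D • (r0 • a + r1 • b) = x)
    (hy : D • (s0 • a + s1 • b) = y) :
    Submodule.span ℂ {a, b} ≤ Submodule.span ℂ {x, y} := by
  rw [Submodule.span_le]
  have hc : (D * (r0 * s1 - s0 * r1))⁻¹ * (D * (r0 * s1 - s0 * r1)) = 1 :=
    inv_mul_cancel₀ (mul_ne_zero hD hr)
  set c := (D * (r0 * s1 - s0 * r1))⁻¹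
  intro z hz
  rw [SetLike.mem_coe, Submodule.mem_span_pair]
  rcases hz with rfl | hz
  · refine ⟨c * s1, -(c * r1), ?_⟩
    rw [← hx, ← hy]
    have : (c * s1) • D • (r0 • z + r1 • b) + (-(c * r1)) • D • (s0 • z + s1 • b) =
      (c * (D * (r0 * s1 - s0 * r1))) • z := by module
    rw [this, hc, one_smul]
  · rw [Set.mem_singleton_iff] at hz
    subst hz
    refine ⟨-(c * s0), c * r0, ?_⟩
    rw [← hx, ← hy]
    have : (-(c * s0)) • D • (r0 • a + r1 • z) + (c * r0) • D • (s0 • a + s1 • z) =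
      (c * (D * (r0 * s1 - s0 * r1))) • z := by module
    rw [this, hc, one_smul]

theorem dual_forms (E : Fin 4 → C4) (hE : (Matrix.of fun i j => E j i).det ≠ 0) :
    ∃ U : Fin 4 → R3, (∀ k, (U k).IsHomogeneous 1) ∧
      ∀ (y : Fin 4 → ℂ) k, eval (∑ l, y l • E l) (U k) = y k := by
  set M : Matrix (Fin 4) (Fin 4) ℂ := Matrix.of fun i j => E j i
  refine ⟨fun k => ∑ j, C (M⁻¹ k j) * X j, ?_, ?_⟩
  · intro k
    apply IsHomogeneous.sum
    intro j _
    exact isHomogeneous_C_mul_X _ _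
  · intro y k
    have h1 : (∑ l, y l • E l) = M.mulVec y := by
      ext i
      simp [Matrix.mulVec, dotProduct, M, mul_comm]
    have h2 : M⁻¹.mulVec (M.mulVec y) = y := by
      rw [Matrix.mulVec_mulVec, Matrix.nonsing_inv_mul _ (isUnit_iff_ne_zero.2 hE),
        Matrix.one_mulVec]
    rw [h1, map_sum]
    simp only [map_mul, eval_C, eval_X]
    exact congrFun h2 k

def matA {R : Type*} [CommRing R] (v : Fin 9 → Fin 2 → Fin 4 → R) (i j : Fin 9) :
    Matrix (Fin 4) (Fin 4) R :=
  Matrix.of fun k l => (![v i 0, v i 1, v j 0, v j 1] : Fin 4 → Fin 4 → R) l k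

def blk {R : Type*} [CommRing R] (v : Fin 9 → Fin 2 → Fin 4 → R) (i : Fin 9) (m : Fin 2 → Fin 4) :
    Matrix (Fin 2) (Fin 2) R :=
  Matrix.of fun k l => ((matA v 0 1).adjugate.mulVec (v i l)) (m k)

def matN {R : Type*} [CommRing R] (X1 X2 Y1 Y2 : Matrix (Fin 2) (Fin 2) R) :
    Matrix (Fin 2) (Fin 2) R := X1 * X2.adjugate * Y2 * Y1.adjugate

def disc {R : Type*} [CommRing R] (v : Fin 9 → Fin 2 → Fin 4 → R) : R :=
  (matA v 0 1).det * (blk v 2 ![2, 3]).det * (blk v 3 ![0, 1]).det * (blk v 3 ![2, 3]).det *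
    ((matN (blk v 2 ![0, 1]) (blk v 2 ![2, 3]) (blk v 3 ![0, 1]) (blk v 3 ![2, 3])).trace ^ 2 -
      4 * (matN (blk v 2 ![0, 1]) (blk v 2 ![2, 3]) (blk v 3 ![0, 1]) (blk v 3 ![2, 3])).det)

theorem map_matA {R S : Type*} [CommRing R] [CommRing S] (f : R →+* S)
    (v : Fin 9 → Fin 2 → Fin 4 → R) (i j : Fin 9) :
    (matA v i j).map f = matA (fun a b c => f (v a b c)) i j := by
  ext k l
  fin_cases l <;> rfl

theorem map_blk {R S : Type*} [CommRing R] [CommRing S] (f : R →+* S)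
    (v : Fin 9 → Fin 2 → Fin 4 → R) (i : Fin 9) (m : Fin 2 → Fin 4) :
    (blk v i m).map f = blk (fun a b c => f (v a b c)) i m := by
  ext k l
  rw [Matrix.map_apply]
  simp only [blk, Matrix.of_apply]
  rw [RingHom.map_mulVec, ← map_matA]
  have h := RingHom.map_adjugate f (matA v 0 1)
  rw [RingHom.mapMatrix_apply, RingHom.mapMatrix_apply] at h
  rw [← h]
  rfl

theorem map_matN {R S : Type*} [CommRing R] [CommRing S] (f : R →+* S)
    (X1 X2 Y1 Y2 : Matrix (Fin 2) (Fin 2) R) :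
    (matN X1 X2 Y1 Y2).map f = matN (X1.map f) (X2.map f) (Y1.map f) (Y2.map f) := by
  simp only [matN, ← RingHom.mapMatrix_apply, map_mul, RingHom.map_adjugate]

theorem map_disc {R S : Type*} [CommRing R] [CommRing S] (f : R →+* S)
    (v : Fin 9 → Fin 2 → Fin 4 → R) : f (disc v) = disc (fun a b c => f (v a b c)) := by
  have ht : ∀ M : Matrix (Fin 2) (Fin 2) R, f M.trace = (M.map f).trace := by
    intro M
    simp [Matrix.trace_fin_two]
  simp only [disc, map_mul, map_sub, map_pow, RingHom.map_det, RingHom.mapMatrix_apply, ht,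
    map_matN, map_blk, map_matA, map_ofNat]

theorem blk_rel (v : Fin 9 → Fin 2 → C4) (i : Fin 9) (l : Fin 2) :
    (matA v 0 1).det • v i l = blk v i ![0, 1] 0 l • v 0 0 + blk v i ![0, 1] 1 l • v 0 1 +
      blk v i ![2, 3] 0 l • v 1 0 + blk v i ![2, 3] 1 l • v 1 1 := by
  have h : (matA v 0 1).mulVec ((matA v 0 1).adjugate.mulVec (v i l)) =
      (matA v 0 1).det • v i l := by
    rw [Matrix.mulVec_mulVec, Matrix.mul_adjugate, Matrix.smul_mulVec, Matrix.one_mulVec]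
  rw [← h]
  generalize hc : (matA v 0 1).adjugate.mulVec (v i l) = c
  have hr : blk v i ![0, 1] 0 l • v 0 0 + blk v i ![0, 1] 1 l • v 0 1 +
      blk v i ![2, 3] 0 l • v 1 0 + blk v i ![2, 3] 1 l • v 1 1 =
      c 0 • v 0 0 + c 1 • v 0 1 + c 2 • v 1 0 + c 3 • v 1 1 := by
    rw [← hc]
    rfl
  rw [hr]
  ext k
  simp [Matrix.mulVec, dotProduct, Fin.sum_univ_four, matA]
  ring

theorem line_aux (a b a0 b0 a1 b1 : C4) (D e dX : ℂ) (X1 X2 R P Q : Matrix (Fin 2) (Fin 2) ℂ)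
    (j : Fin 2)
    (ha : D • a = X1 0 0 • a0 + X1 1 0 • b0 + X2 0 0 • a1 + X2 1 0 • b1)
    (hb : D • b = X1 0 1 • a0 + X1 1 1 • b0 + X2 0 1 • a1 + X2 1 1 • b1)
    (h1 : ∀ i, (X1 * R) i j = e * P i j) (h2 : ∀ i, (X2 * R) i j = dX * Q i j) :
    D • (R 0 j • a + R 1 j • b) = e • (P 0 j • a0 + P 1 j • b0) + dX • (Q 0 j • a1 + Q 1 j • b1) := by
  have h10 := h1 0
  have h11 := h1 1
  have h20 := h2 0
  have h21 := h2 1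
  rw [Matrix.mul_apply, Fin.sum_univ_two] at h10 h11 h20 h21
  have e1 : D • (R 0 j • a + R 1 j • b) = R 0 j • (D • a) + R 1 j • (D • b) := by module
  have e2 : e • (P 0 j • a0 + P 1 j • b0) + dX • (Q 0 j • a1 + Q 1 j • b1) =
    (e * P 0 j) • a0 + (e * P 1 j) • b0 + (dX * Q 0 j) • a1 + (dX * Q 1 j) • b1 := by module
  rw [e1, e2, ← h10, ← h11, ← h20, ← h21, ha, hb]
  module

theorem det_E (A : Matrix (Fin 4) (Fin 4) ℂ) (hA : A.det ≠ 0) (P Q : Matrix (Fin 2) (Fin 2) ℂ)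
    (hP : P.det ≠ 0) (hQ : Q.det ≠ 0) :
    (A * !![P 0 0, 0, P 0 1, 0; P 1 0, 0, P 1 1, 0; 0, Q 0 0, 0, Q 0 1;
      0, Q 1 0, 0, Q 1 1]).det ≠ 0 := by
  rw [Matrix.det_mul]
  refine mul_ne_zero hA ?_
  have h : (!![P 0 0, 0, P 0 1, 0; P 1 0, 0, P 1 1, 0; 0, Q 0 0, 0, Q 0 1;
      0, Q 1 0, 0, Q 1 1] : Matrix (Fin 4) (Fin 4) ℂ).det = - (P.det * Q.det) := by
    rw [Matrix.det_fin_two, Matrix.det_fin_two]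
    simp [Matrix.det_succ_row_zero, Fin.sum_univ_succ, Fin.succAbove]
    ring
  rw [h]
  exact neg_ne_zero.2 (mul_ne_zero hP hQ)

theorem transversals (v : Fin 9 → Fin 2 → C4) (hv : disc v ≠ 0) :
    ∃ (E : Fin 4 → C4) (U : Fin 4 → R3), (∀ k, (U k).IsHomogeneous 1) ∧
      (∀ (y : Fin 4 → ℂ) k, eval (∑ l, y l • E l) (U k) = y k) ∧
      ∀ i : Fin 9, i.1 < 4 → ∃ α β γ δ : ℂ, (α ≠ 0 ∨ β ≠ 0) ∧ (γ ≠ 0 ∨ δ ≠ 0) ∧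
        Submodule.span ℂ {v i 0, v i 1} ≤
          Submodule.span ℂ {α • E 0 + β • E 1, γ • E 2 + δ • E 3} := by
  rw [disc] at hv
  have hX0 := blk_rel v 2 0
  have hX1 := blk_rel v 2 1
  have hY0 := blk_rel v 3 0
  have hY1 := blk_rel v 3 1
  generalize blk v 2 ![0, 1] = X1 at *
  generalize blk v 2 ![2, 3] = X2 at *
  generalize blk v 3 ![0, 1] = Y1 at *
  generalize blk v 3 ![2, 3] = Y2 at *
  have hN := right_ne_zero_of_mul hv
  have hv := left_ne_zero_of_mul hv
  have hdY2 := right_ne_zero_of_mul hv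
  have hv := left_ne_zero_of_mul hv
  have hdY1 := right_ne_zero_of_mul hv
  have hv := left_ne_zero_of_mul hv
  have hdX2 := right_ne_zero_of_mul hv
  have hD := left_ne_zero_of_mul hv
  obtain ⟨P, e, hP, hNP⟩ := eigen_two _ hN
  obtain ⟨S, hS⟩ : ∃ S, S = Y1.adjugate * P := ⟨_, rfl⟩
  obtain ⟨Q, hQ⟩ : ∃ Q, Q = Y2 * S := ⟨_, rfl⟩
  obtain ⟨R, hR⟩ : ∃ R, R = X2.adjugate * Q := ⟨_, rfl⟩
  have hadj : ∀ M : Matrix (Fin 2) (Fin 2) ℂ, M.adjugate.det = M.det := by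
    intro M
    simp [Matrix.det_adjugate]
  have hSd : S.det ≠ 0 := by
    rw [hS, Matrix.det_mul, hadj]
    exact mul_ne_zero hdY1 hP
  have hQd : Q.det ≠ 0 := by
    rw [hQ, Matrix.det_mul]
    exact mul_ne_zero hdY2 hSd
  have hRd : R.det ≠ 0 := by
    rw [hR, Matrix.det_mul, hadj]
    exact mul_ne_zero hdX2 hQd
  have k1 : X1 * R = P * Matrix.diagonal e := by
    rw [← hNP, hR, hQ, hS, matN]
    simp only [Matrix.mul_assoc]
  have k2 : X2 * R = X2.det • Q := by
    rw [hR, ← Matrix.mul_assoc, Matrix.mul_adjugate, Matrix.smul_mul, Matrix.one_mul]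
  have k3 : Y1 * S = Y1.det • P := by
    rw [hS, ← Matrix.mul_assoc, Matrix.mul_adjugate, Matrix.smul_mul, Matrix.one_mul]
  have l1 : ∀ j i, (X1 * R) i j = e j * P i j := by
    intro j i
    rw [k1, Matrix.mul_diagonal, mul_comm]
  have l2 : ∀ j i, (X2 * R) i j = X2.det * Q i j := by
    intro j i
    rw [k2]
    rfl
  have l3 : ∀ j i, (Y1 * S) i j = Y1.det * P i j := by
    intro j i
    rw [k3]
    rfl
  have l4 : ∀ j i, (Y2 * S) i j = 1 * Q i j := by
    intro j i
    rw [hQ, one_mul]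
  obtain ⟨E, hE⟩ : ∃ E : Fin 4 → C4, E = ![P 0 0 • v 0 0 + P 1 0 • v 0 1,
    Q 0 0 • v 1 0 + Q 1 0 • v 1 1, P 0 1 • v 0 0 + P 1 1 • v 0 1,
    Q 0 1 • v 1 0 + Q 1 1 • v 1 1] := ⟨_, rfl⟩
  have hE0 : E 0 = P 0 0 • v 0 0 + P 1 0 • v 0 1 := by rw [hE]; rfl
  have hE1 : E 1 = Q 0 0 • v 1 0 + Q 1 0 • v 1 1 := by rw [hE]; rfl
  have hE2 : E 2 = P 0 1 • v 0 0 + P 1 1 • v 0 1 := by rw [hE]; rfl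
  have hE3 : E 3 = Q 0 1 • v 1 0 + Q 1 1 • v 1 1 := by rw [hE]; rfl
  have hEdet : (Matrix.of fun i j => E j i).det ≠ 0 := by
    have h := det_E (matA v 0 1) hD P Q hP hQd
    convert h using 2
    ext i j
    rw [Matrix.mul_apply, Fin.sum_univ_four]
    fin_cases j
    · simp [hE0, matA]; ring
    · simp [hE1, matA]; ring
    · simp [hE2, matA]; ring
    · simp [hE3, matA]; ring
  obtain ⟨U, hU1, hU2⟩ := dual_forms E hEdet
  have hP2 : P 0 0 * P 1 1 - P 0 1 * P 1 0 ≠ 0 := by rwa [Matrix.det_fin_two] at hP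
  have hQ2 : Q 0 0 * Q 1 1 - Q 0 1 * Q 1 0 ≠ 0 := by rwa [Matrix.det_fin_two] at hQd
  have hR2 : R 0 0 * R 1 1 - R 0 1 * R 1 0 ≠ 0 := by rwa [Matrix.det_fin_two] at hRd
  have hS2 : S 0 0 * S 1 1 - S 0 1 * S 1 0 ≠ 0 := by rwa [Matrix.det_fin_two] at hSd
  refine ⟨E, U, hU1, hU2, ?_⟩
  have c0 : ∃ α β γ δ : ℂ, (α ≠ 0 ∨ β ≠ 0) ∧ (γ ≠ 0 ∨ δ ≠ 0) ∧
        Submodule.span ℂ {v 0 0, v 0 1} ≤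
          Submodule.span ℂ {α • E 0 + β • E 1, γ • E 2 + δ • E 3} := by
    refine ⟨1, 0, 1, 0, by simp, by simp, span_pair_le _ _ _ _ 1 _ _ _ _ one_ne_zero hP2 ?_ ?_⟩
    · rw [hE0]; module
    · rw [hE2]; module
  have c1 : ∃ α β γ δ : ℂ, (α ≠ 0 ∨ β ≠ 0) ∧ (γ ≠ 0 ∨ δ ≠ 0) ∧
        Submodule.span ℂ {v 1 0, v 1 1} ≤
          Submodule.span ℂ {α • E 0 + β • E 1, γ • E 2 + δ • E 3} := by
    refine ⟨0, 1, 0, 1, by simp, by simp, span_pair_le _ _ _ _ 1 _ _ _ _ one_ne_zero hQ2 ?_ ?_⟩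
    · rw [hE1]; module
    · rw [hE3]; module
  have c2 : ∃ α β γ δ : ℂ, (α ≠ 0 ∨ β ≠ 0) ∧ (γ ≠ 0 ∨ δ ≠ 0) ∧
        Submodule.span ℂ {v 2 0, v 2 1} ≤
          Submodule.span ℂ {α • E 0 + β • E 1, γ • E 2 + δ • E 3} := by
    refine ⟨e 0, X2.det, e 1, X2.det, Or.inr hdX2, Or.inr hdX2,
      span_pair_le _ _ _ _ _ _ _ _ _ hD hR2 ?_ ?_⟩
    · rw [hE0, hE1]
      exact line_aux _ _ _ _ _ _ _ _ _ X1 X2 R P Q 0 hX0 hX1 (l1 0) (l2 0)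
    · rw [hE2, hE3]
      exact line_aux _ _ _ _ _ _ _ _ _ X1 X2 R P Q 1 hX0 hX1 (l1 1) (l2 1)
  have c3 : ∃ α β γ δ : ℂ, (α ≠ 0 ∨ β ≠ 0) ∧ (γ ≠ 0 ∨ δ ≠ 0) ∧
        Submodule.span ℂ {v 3 0, v 3 1} ≤
          Submodule.span ℂ {α • E 0 + β • E 1, γ • E 2 + δ • E 3} := by
    refine ⟨Y1.det, 1, Y1.det, 1, Or.inl hdY1, Or.inl hdY1,
      span_pair_le _ _ _ _ _ _ _ _ _ hD hS2 ?_ ?_⟩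
    · rw [hE0, hE1]
      exact line_aux _ _ _ _ _ _ _ _ _ Y1 Y2 S P Q 0 hY0 hY1 (l3 0) (l4 0)
    · rw [hE2, hE3]
      exact line_aux _ _ _ _ _ _ _ _ _ Y1 Y2 S P Q 1 hY0 hY1 (l3 1) (l4 1)
  intro i hi
  have hi4 : i = 0 ∨ i = 1 ∨ i = 2 ∨ i = 3 := by
    omega
  rcases hi4 with rfl | rfl | rfl | rfl
  · exact c0
  · exact c1
  · exact c2
  · exact c3

/-- The generic configuration. -/
def genV : Fin 9 → Fin 2 → Fin 4 → MvPolynomial (Fin 9 × Fin 2 × Fin 4) ℂ :=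
  fun i j k => X (i, j, k)

theorem eval_genV (v : Fin 9 → Fin 2 → C4) :
    (fun a b c => eval (fun p : Fin 9 × Fin 2 × Fin 4 => v p.1 p.2.1 p.2.2) (genV a b c)) = v := by
  funext a b c
  simp [genV]

theorem eval_disc (v : Fin 9 → Fin 2 → C4) :
    eval (fun p => v p.1 p.2.1 p.2.2) (disc genV) = disc v := by
  rw [map_disc, eval_genV]

def exV : Fin 9 → Fin 2 → C4 :=
  ![![![1, 0, 0, 0], ![0, 1, 0, 0]], ![![0, 0, 1, 0], ![0, 0, 0, 1]],
    ![![1, 0, 1, 0], ![0, 1, 0, 1]], ![![1, 0, 1, 0], ![0, 1, 0, 2]], 0, 0, 0, 0, 0]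

theorem disc_ne : disc genV ≠ 0 := by
  intro h
  have h1 := eval_disc exV
  rw [h, map_zero] at h1
  have hA : matA exV 0 1 = 1 := by
    ext i j
    fin_cases i <;> fin_cases j <;> simp [matA, exV]
  have hb : ∀ i m, blk exV i m = Matrix.of fun k l => exV i l (m k) := by
    intro i m
    rw [blk, hA]
    simp
  have b1 : blk exV 2 ![0, 1] = 1 := by
    rw [hb]
    ext i j
    fin_cases i <;> fin_cases j <;> simp [exV]
  have b2 : blk exV 2 ![2, 3] = 1 := by
    rw [hb]
    ext i j
    fin_cases i <;> fin_cases j <;> simp [exV]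
  have b3 : blk exV 3 ![0, 1] = 1 := by
    rw [hb]
    ext i j
    fin_cases i <;> fin_cases j <;> simp [exV]
  have b4 : blk exV 3 ![2, 3] = !![1, 0; 0, 2] := by
    rw [hb]
    ext i j
    fin_cases i <;> fin_cases j <;> simp [exV]
  rw [disc, hA, b1, b2, b3, b4] at h1
  simp [matN, Matrix.trace_fin_two, Matrix.det_fin_two] at h1
  norm_num at h1

/-! ### General position and conclusion -/

theorem eval_matA (v : Fin 9 → Fin 2 → C4) (i j : Fin 9) :
    eval (fun p => v p.1 p.2.1 p.2.2) (matA genV i j).det = (matA v i j).det := by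
  rw [RingHom.map_det, RingHom.mapMatrix_apply, map_matA, eval_genV]

theorem matA_ne (i j : Fin 9) (hij : i ≠ j) : (matA genV i j).det ≠ 0 := by
  intro h
  let w : Fin 9 → Fin 2 → C4 := fun a b c =>
    if a = i then (if c.1 = b.1 then 1 else 0) else (if c.1 = b.1 + 2 then 1 else 0)
  have h1 := eval_matA w i j
  rw [h, map_zero] at h1
  have hA : matA w i j = 1 := by
    ext k l
    fin_cases k <;> fin_cases l <;> simp [matA, w, hij.symm]
  rw [hA, Matrix.det_one] at h1
  exact zero_ne_one h1

theorem matA_indep (v : Fin 9 → Fin 2 → C4) (i j : Fin 9) (h : (matA v i j).det ≠ 0)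
    (s t s' t' : ℂ) (hs : s • v i 0 + t • v i 1 + s' • v j 0 + t' • v j 1 = 0) :
    s = 0 ∧ t = 0 ∧ s' = 0 ∧ t' = 0 := by
  have h1 : ![s, t, s', t'] = 0 := by
    apply Matrix.eq_zero_of_mulVec_eq_zero h
    ext k
    have h2 := congrFun hs k
    simp at h2
    simp [Matrix.mulVec, dotProduct, Fin.sum_univ_four, matA]
    linear_combination h2
  exact ⟨congrFun h1 0, congrFun h1 1, congrFun h1 2, congrFun h1 3⟩

theorem matA_li (v : Fin 9 → Fin 2 → C4) (i j : Fin 9) (h : (matA v i j).det ≠ 0) :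
    LinearIndependent ℂ ![v i 0, v i 1] := by
  rw [LinearIndependent.pair_iff]
  intro s t hst
  have h1 := matA_indep v i j h s t 0 0 (by simpa using hst)
  exact ⟨h1.1, h1.2.1⟩

theorem matA_disj (v : Fin 9 → Fin 2 → C4) (i j : Fin 9) (h : (matA v i j).det ≠ 0) :
    Submodule.span ℂ {v i 0, v i 1} ⊓ Submodule.span ℂ {v j 0, v j 1} = ⊥ := by
  rw [eq_bot_iff]
  rintro x ⟨hx, hy⟩
  obtain ⟨s, t, hx⟩ := Submodule.mem_span_pair.1 hx
  obtain ⟨s', t', hy⟩ := Submodule.mem_span_pair.1 hy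
  have h1 := matA_indep v i j h s t (-s') (-t') (by
    have : s • v i 0 + t • v i 1 + (-s') • v j 0 + (-t') • v j 1 =
      (s • v i 0 + t • v i 1) - (s' • v j 0 + t' • v j 1) := by module
    rw [this, hx, hy, sub_self])
  rw [Submodule.mem_bot, ← hx, h1.1, h1.2.1]
  simp

/-- The system `𝓛_{10}(3,3,3,3,1,1,1,1,1)` for nine general lines has dimension
exactly 1, yet `binom(13,3) = 286 < 287 = 4·58 + 5·11`, so it has negative
virtual dimension and is special (unexpected). -/
theorem stmt_6 :
    GeneralLines 9 (fun L =>
      Module.finrank ℂ ↥(linSys 10 L ![3, 3, 3, 3, 1, 1, 1, 1, 1]) = 1) ∧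
    Nat.choose 13 3 < 4 * 58 + 5 * 11 := by
  refine ⟨?_, by decide⟩
  obtain ⟨P, hP, hPv⟩ := upper
  let Pos : MvPolynomial (Fin 9 × Fin 2 × Fin 4) ℂ :=
    ∏ q : Fin 9 × Fin 9, if q.1 = q.2 then 1 else (matA genV q.1 q.2).det
  have hPos : Pos ≠ 0 := by
    apply Finset.prod_ne_zero_iff.2
    intro q _
    by_cases hq : q.1 = q.2
    · rw [if_pos hq]
      exact one_ne_zero
    · rw [if_neg hq]
      exact matA_ne _ _ hq
  refine ⟨P * (disc genV * Pos), mul_ne_zero hP (mul_ne_zero disc_ne hPos), ?_⟩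
  intro v hv
  rw [map_mul, map_mul] at hv
  have hv1 := left_ne_zero_of_mul hv
  have hv2 := left_ne_zero_of_mul (right_ne_zero_of_mul hv)
  have hv3 := right_ne_zero_of_mul (right_ne_zero_of_mul hv)
  rw [eval_disc] at hv2
  have hA : ∀ i j, i ≠ j → (matA v i j).det ≠ 0 := by
    intro i j hij
    rw [map_prod] at hv3
    have h1 := Finset.prod_ne_zero_iff.1 hv3 (i, j) (Finset.mem_univ _)
    rw [if_neg hij, eval_matA] at h1
    exact h1
  refine ⟨?_, ?_, ?_⟩
  · intro i
    obtain ⟨j, hj⟩ := exists_ne i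
    exact matA_li v i j (hA i j hj.symm)
  · intro i j hij
    exact matA_disj v i j (hA i j hij)
  · obtain ⟨E, U, hU1, hU2, hL⟩ := transversals v hv2
    obtain ⟨F, hF, hF0⟩ := lower (fun i => v i 0) (fun i => v i 1) E U hU1 hU2 hL
    have hup := hPv v hv1
    have hc : coeff (mono (5, 2, 2)) F ≠ 0 := fun h => hF0 (hup F hF h)
    refine finrank_eq_one (⟨F, hF⟩ : ↥(linSys 10 _ _)) (fun h => hF0 (congrArg Subtype.val h)) ?_
    rintro ⟨G, hG⟩
    refine ⟨coeff (mono (5, 2, 2)) G / coeff (mono (5, 2, 2)) F, ?_⟩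
    apply Subtype.ext
    have h0 := hup (G - (coeff (mono (5, 2, 2)) G / coeff (mono (5, 2, 2)) F) • F)
      (Submodule.sub_mem _ hG (Submodule.smul_mem _ _ hF)) (by
        rw [coeff_sub, coeff_smul, smul_eq_mul, div_mul_cancel₀ _ hc, sub_self])
    exact (sub_eq_zero.1 h0).symm
end
end
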